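/- arXiv:2511.18426 — 2 statements merged into one kernel-verified Lean document; each statement's English description precedes it below -/
import Mathlib

section
/- Let f be a polynomial in two variables over ℂ with zero constant term and let F be its image in the formal power series ring ℂ[[x,y]]. Suppose that F = u · g₁ ⋯ g_r, where u is a unit of ℂ[[x,y]], r ≥ 1, each g_i is irreducible in ℂ[[x,y]], and g_i and g_j are non-associated for i ≠ j. Then the Tjurina number, Milnor number, and δ-invariant satisfy τ(f) ≤ μ(f) ≤ 2δ(f). -/
open MvPolynomial

set_option synthInstance.maxHeartbeats 1000000
set_option maxHeartbeats 2000000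

/-- The local ring `R = ℂ[[x,y]]/(F)`, where `F` is the image in `ℂ[[x,y]]` of `f ∈ ℂ[x,y]`. -/
def CurveGermRing (f : MvPolynomial (Fin 2) ℂ) : Type :=
  MvPowerSeries (Fin 2) ℂ ⧸ Ideal.span {(↑f : MvPowerSeries (Fin 2) ℂ)}

noncomputable instance (f : MvPolynomial (Fin 2) ℂ) : CommRing (CurveGermRing f) :=
  inferInstanceAs
    (CommRing (MvPowerSeries (Fin 2) ℂ ⧸ Ideal.span {(↑f : MvPowerSeries (Fin 2) ℂ)}))

noncomputable instance (f : MvPolynomial (Fin 2) ℂ) : Algebra ℂ (CurveGermRing f) :=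
  inferInstanceAs
    (Algebra ℂ (MvPowerSeries (Fin 2) ℂ ⧸ Ideal.span {(↑f : MvPowerSeries (Fin 2) ℂ)}))

/-- The Milnor number `μ(f) = dim_ℂ ℂ[[x,y]]/(∂f/∂x, ∂f/∂y)`. -/
noncomputable def milnorNumber (f : MvPolynomial (Fin 2) ℂ) : ℕ :=
  Module.finrank ℂ
    (MvPowerSeries (Fin 2) ℂ ⧸ Ideal.span
      {(↑(pderiv 0 f) : MvPowerSeries (Fin 2) ℂ), (↑(pderiv 1 f) : MvPowerSeries (Fin 2) ℂ)})

/-- The Tjurina number `τ(f) = dim_ℂ ℂ[[x,y]]/(F, ∂f/∂x, ∂f/∂y)`. -/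
noncomputable def tjurinaNumber (f : MvPolynomial (Fin 2) ℂ) : ℕ :=
  Module.finrank ℂ
    (MvPowerSeries (Fin 2) ℂ ⧸ Ideal.span
      {(↑f : MvPowerSeries (Fin 2) ℂ),
       (↑(pderiv 0 f) : MvPowerSeries (Fin 2) ℂ), (↑(pderiv 1 f) : MvPowerSeries (Fin 2) ℂ)})

/-- The δ-invariant `δ(f) = dim_ℂ (O̅ / R)`, where `O̅` is the normalization of `R`, i.e. the
integral closure of `R = ℂ[[x,y]]/(F)` in its total ring of fractions `K`, and the quotient is
by the canonical image of `R` in `O̅`. -/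
noncomputable def deltaInvariant (f : MvPolynomial (Fin 2) ℂ) (K : Type) [CommRing K]
    [Algebra (CurveGermRing f) K] [Algebra ℂ K] [IsScalarTower ℂ (CurveGermRing f) K] : ℕ :=
  Module.finrank ℂ
    ((integralClosure (CurveGermRing f) K) ⧸
      LinearMap.range (Algebra.linearMap (CurveGermRing f) (integralClosure (CurveGermRing f) K)))

/-!
Write `i(A, B)` for the intersection number `dim k⟦x, y⟧ / (A, B)`. After a linear change of
coordinates the germ `F` is a unit times a Weierstrass polynomial `W` in `y` over `k⟦x⟧`, of some
degree `n`. Newton–Puiseux splits `W` over `k⟦x^(1/N)⟧`, so the intersection number of a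
distinguished polynomial with `B` is the order of `B` at its roots. Then:

* Teissier's lemma: along each branch of the polar curve `∂F/∂y = 0` one has `dF = ∂F/∂x dx`,
  whence `i(F, ∂F/∂y) = i(∂F/∂x, ∂F/∂y) + n - 1`, that is `μ = i(W, W') - n + 1`.
* Let `R = k⟦x⟧[y] / (W)`, with normalization `O` in its total ring of fractions, and pair
  `(a, b) ↦ ∑ res (a(ρ) b(ρ))` over the roots `ρ` of `W`. By Lagrange interpolation `(W')⁻¹ R` is
  orthogonal to `R`, so its elements orthogonal to `O` have codimension at most `δ = dim O / R`.
  Those have at most a simple pole, with residues summing to zero, so they exceed `O` by at most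
  `n - 1` dimensions. Hence `i(W, W') = dim (W')⁻¹ R / R ≤ 2δ + n - 1`.

Together these give `μ ≤ 2δ`, while `τ ≤ μ` holds because `τ` is the dimension of a quotient.
-/

open scoped Polynomial PowerSeries

namespace PlaneCurve

/-! ### Weierstrass preparation -/

section Weierstrass

variable {A : Type*} [CommRing A] [IsLocalRing A]

theorem coeff_zero_map_residue_ne_zero {Q : A[X]} (hQ : IsUnit (Q : A⟦X⟧)) :
    (Q.map (IsLocalRing.residue A)).coeff 0 ≠ 0 := by
  rw [PowerSeries.isUnit_iff_constantCoeff, Polynomial.constantCoeff_coe] at hQ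
  rw [Polynomial.coeff_map]
  exact (hQ.map _).ne_zero

theorem eq_one_of_dvd_of_isUnit_coe {w p : A[X]}
    (hw : w.IsDistinguishedAt (IsLocalRing.maximalIdeal A)) (hp : p.Monic) (hpw : p ∣ w)
    (hu : IsUnit (p : A⟦X⟧)) : p = 1 := by
  have hdvd : p.map (IsLocalRing.residue A) ∣ Polynomial.X ^ w.natDegree :=
    hw.map_eq_X_pow ▸ Polynomial.map_dvd (IsLocalRing.residue A) hpw
  obtain ⟨i, -, hi⟩ := (dvd_prime_pow Polynomial.prime_X _).1 hdvd
  have hpow := Polynomial.eq_of_monic_of_associated (hp.map _) (Polynomial.monic_X_pow i) hi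
  have hi0 : i = 0 := by
    by_contra hi0
    have hcoeff := coeff_zero_map_residue_ne_zero hu
    simp [hpow, Ne.symm hi0] at hcoeff
  rw [← hp.natDegree_eq_zero, ← hp.natDegree_map (IsLocalRing.residue A), hpow,
    Polynomial.natDegree_X_pow, hi0]

theorem irreducible_of_irreducible_coe [IsDomain A] {w : A[X]}
    (hw : w.IsDistinguishedAt (IsLocalRing.maximalIdeal A)) (hirr : Irreducible (w : A⟦X⟧)) :
    Irreducible w := by
  have hne : w ≠ 1 := by
    rintro rfl
    exact hirr.not_isUnit (by simp)
  refine (Polynomial.irreducible_of_monic hw.monic hne).2 fun p q hp hq hpq => ?_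
  refine (hirr.isUnit_or_isUnit (by rw [← hpq, Polynomial.coe_mul])).imp
    (eq_one_of_dvd_of_isUnit_coe hw hp ⟨q, hpq.symm⟩)
    (eq_one_of_dvd_of_isUnit_coe hw hq ⟨p, by rw [mul_comm, hpq]⟩)

variable [IsAdicComplete (IsLocalRing.maximalIdeal A) A]

theorem dvd_of_coe_dvd_coe {P h : A[X]} (hP : P.IsDistinguishedAt (IsLocalRing.maximalIdeal A))
    (hdvd : (P : A⟦X⟧) ∣ h) : P ∣ h := by
  rw [← Ideal.Quotient.eq_zero_iff_dvd] at hdvd ⊢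
  exact hP.algEquivQuotient.injective (by simpa using hdvd)

theorem mk_coe_surjective {P : A[X]} (hP : P.IsDistinguishedAt (IsLocalRing.maximalIdeal A)) :
    Function.Surjective fun h : A[X] => Ideal.Quotient.mk (Ideal.span {(P : A⟦X⟧)}) h := fun z => by
  obtain ⟨h, hh⟩ := (hP.algEquivQuotient.surjective.comp Ideal.Quotient.mk_surjective) z
  exact ⟨h, by simpa using hh⟩

theorem exists_isDistinguishedAt_mul_eq [IsDomain A] {h : A[X]}
    (hh : h.map (IsLocalRing.residue A) ≠ 0) :
    ∃ P Q : A[X], P.IsDistinguishedAt (IsLocalRing.maximalIdeal A) ∧ IsUnit (Q : A⟦X⟧) ∧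
      h = P * Q := by
  have hres : (h : A⟦X⟧).map (IsLocalRing.residue A) ≠ 0 := by
    rwa [← Polynomial.polynomial_map_coe, Ne, Polynomial.coe_eq_zero_iff]
  obtain ⟨P, u, hPu⟩ := PowerSeries.exists_isWeierstrassFactorization hres
  have hP := hPu.isDistinguishedAt
  obtain ⟨Q, rfl⟩ := dvd_of_coe_dvd_coe hP ⟨u, hPu.eq_mul⟩
  have hQu : (Q : A⟦X⟧) = u := by
    have hP0 : (P : A⟦X⟧) ≠ 0 := by simpa using hP.monic.ne_zero
    exact mul_left_cancel₀ hP0 (by rw [← hPu.eq_mul, Polynomial.coe_mul])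
  exact ⟨P, Q, hP, hQu ▸ hPu.isUnit, rfl⟩

theorem exists_isDistinguishedAt_associated [IsDomain A] {γ : A⟦X⟧} (hirr : Irreducible γ)
    (hγ : γ.map (IsLocalRing.residue A) ≠ 0) :
    ∃ w : A[X], w.IsDistinguishedAt (IsLocalRing.maximalIdeal A) ∧ Irreducible w ∧
      Associated (w : A⟦X⟧) γ := by
  obtain ⟨w, u, hw⟩ := PowerSeries.exists_isWeierstrassFactorization hγ
  have hassoc : Associated (w : A⟦X⟧) γ := ⟨hw.isUnit.unit, hw.eq_mul.symm⟩
  exact ⟨w, hw.isDistinguishedAt, irreducible_of_irreducible_coe hw.isDistinguishedAt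
    (hassoc.irreducible_iff.2 hirr), hassoc⟩

theorem isDistinguishedAt_of_irreducible [IsDomain A] {W : A[X]} (hW : W.Monic)
    (hirr : Irreducible W) (h0 : W.coeff 0 ∈ IsLocalRing.maximalIdeal A) :
    W.IsDistinguishedAt (IsLocalRing.maximalIdeal A) := by
  obtain ⟨P, Q, hP, hQ, rfl⟩ :=
    exists_isDistinguishedAt_mul_eq (h := W) (hW.map (IsLocalRing.residue A)).ne_zero
  have hQm : Q.Monic := hP.monic.of_mul_monic_left hW
  rcases hirr.isUnit_or_isUnit rfl with hPu | hQu
  · rw [hP.monic.isUnit_iff.1 hPu, one_mul] at h0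
    rw [PowerSeries.isUnit_iff_constantCoeff, Polynomial.constantCoeff_coe] at hQ
    exact absurd hQ h0
  · rwa [hQm.isUnit_iff.1 hQu, mul_one]

end Weierstrass

section PowerSeriesLocal

variable {k : Type*} [Field k]

theorem mem_maximalIdeal_iff (a : k⟦X⟧) :
    a ∈ IsLocalRing.maximalIdeal k⟦X⟧ ↔ PowerSeries.constantCoeff a = 0 := by
  rw [PowerSeries.maximalIdeal_eq_span_X, Ideal.mem_span_singleton, PowerSeries.X_dvd_iff]

instance : IsAdicComplete (IsLocalRing.maximalIdeal k⟦X⟧) k⟦X⟧ := by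
  rw [PowerSeries.maximalIdeal_eq_span_X]
  infer_instance

theorem map_residue_eq_zero_iff (g : k⟦X⟧⟦X⟧) :
    g.map (IsLocalRing.residue k⟦X⟧) = 0 ↔ g.map (PowerSeries.constantCoeff (R := k)) = 0 := by
  simp only [PowerSeries.ext_iff, PowerSeries.coeff_map, map_zero,
    IsLocalRing.residue_eq_zero_iff, mem_maximalIdeal_iff]

theorem exists_taylor_isDistinguishedAt [IsAlgClosed k] {W : k⟦X⟧[X]} (hW : W.Monic)
    (hirr : Irreducible W) :
    ∃ a : k, (Polynomial.taylor (PowerSeries.C a) W).IsDistinguishedAt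
      (IsLocalRing.maximalIdeal k⟦X⟧) := by
  have hdeg : (W.map (PowerSeries.constantCoeff (R := k))).degree ≠ 0 := by
    rw [hW.degree_map]
    exact (hW.degree_pos.2 hirr.ne_one).ne'
  obtain ⟨a, ha⟩ := IsAlgClosed.exists_root _ hdeg
  refine ⟨a, isDistinguishedAt_of_irreducible ?_ ?_ ?_⟩
  · rwa [Polynomial.Monic, Polynomial.leadingCoeff_taylor]
  · exact (MulEquiv.irreducible_iff (Polynomial.taylorEquiv (PowerSeries.C a))).2 hirr
  · rw [mem_maximalIdeal_iff, Polynomial.taylor_coeff_zero, ← Polynomial.eval₂_hom,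
      ← Polynomial.eval_map]
    simpa using ha

end PowerSeriesLocal

/-! ### Newton–Puiseux -/

section Tschirnhaus

theorem coeff_taylor_of_natDegree_eq_succ {R : Type*} [CommRing R] {W : R[X]} (hW : W.Monic)
    {n : ℕ} (hn : W.natDegree = n + 1) (c : R) :
    (Polynomial.taylor c W).coeff n = W.coeff n + (n + 1) * c := by
  have hlin : (Polynomial.hasseDeriv n W).natDegree ≤ 1 :=
    (Polynomial.natDegree_hasseDeriv_le W n).trans (by lia)
  have htop : W.coeff (n + 1) = 1 := by rw [← hn, hW.coeff_natDegree]
  rw [Polynomial.taylor_coeff, Polynomial.eq_X_add_C_of_natDegree_le_one hlin]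
  simp [Polynomial.hasseDeriv_coeff, add_comm 1 n, htop, add_comm]

theorem exists_eq_scaleRoots {R : Type*} [CommRing R] [Nontrivial R] {W : R[X]} (hW : W.Monic)
    {s : R} (hs : ∀ i < W.natDegree, s ^ (W.natDegree - i) ∣ W.coeff i) :
    ∃ U : R[X], U.Monic ∧ U.natDegree = W.natDegree ∧ W = U.scaleRoots s := by
  choose! d hd using hs
  set n := W.natDegree with hn
  set L : R[X] := ∑ i : Fin n, Polynomial.C (d i) * Polynomial.X ^ (i : ℕ) with hL
  have hLdeg : L.degree < n := Polynomial.degree_sum_fin_lt _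
  have hU : (Polynomial.X ^ n + L).natDegree = n := by
    rw [Polynomial.natDegree_add_eq_left_of_degree_lt (by simpa using hLdeg),
      Polynomial.natDegree_X_pow]
  refine ⟨Polynomial.X ^ n + L, Polynomial.monic_X_pow_add hLdeg, hU, Polynomial.ext fun i => ?_⟩
  rw [Polynomial.coeff_scaleRoots, hU]
  rcases lt_trichotomy i n with h | rfl | h
  · have hLi : L.coeff i = d i := by
      simp [hL, Polynomial.finsetSum_coeff, Polynomial.coeff_X_pow,
        Fin.sum_univ_eq_sum_range (fun j => if i = j then d j else 0), h]
    rw [Polynomial.coeff_add, Polynomial.coeff_X_pow, if_neg h.ne, zero_add, hLi, hd i h, mul_comm]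
  · simp [Polynomial.coeff_eq_zero_of_degree_lt hLdeg, hn ▸ hW.coeff_natDegree]
  · rw [Polynomial.coeff_eq_zero_of_natDegree_lt h,
      Polynomial.coeff_eq_zero_of_natDegree_lt (hU.trans_lt h), zero_mul]

-- The first edge of the Newton polygon; the factor `n !` clears the denominator of its slope.
open scoped Nat in
theorem exists_newtonSlope (v : ℕ → ℕ∞) {n : ℕ} (hv : ∃ i < n, v i ≠ ⊤) :
    ∃ p : ℕ, (∀ i < n, ((p * (n - i) : ℕ) : ℕ∞) ≤ n ! • v i) ∧
      ∃ i < n, ((p * (n - i) : ℕ) : ℕ∞) = n ! • v i := by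
  classical
  set slope : ℕ → ℕ := fun i => (v i).toNat * (n ! / (n - i))
  have hslope : ∀ i < n, v i ≠ ⊤ → ((slope i * (n - i) : ℕ) : ℕ∞) = n ! • v i := by
    intro i hi hvi
    have hdiv : n ! / (n - i) * (n - i) = n ! :=
      Nat.div_mul_cancel (Nat.dvd_factorial (by lia) (by lia))
    lift v i to ℕ using hvi with m hm
    simp only [slope, ← hm, ENat.toNat_natCast, mul_assoc, hdiv]
    rw [nsmul_eq_mul, mul_comm, Nat.cast_mul]
  obtain ⟨i₀, hi₀, hmin⟩ :=
    ((Finset.range n).filter (v · ≠ ⊤)).exists_min_image slope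
      (by simpa [Finset.Nonempty] using hv)
  simp only [Finset.mem_filter, Finset.mem_range] at hi₀ hmin
  refine ⟨slope i₀, fun i hi => ?_, i₀, hi₀.1, hslope i₀ hi₀.1 hi₀.2⟩
  by_cases hvi : v i = ⊤
  · simp [hvi, Nat.factorial_ne_zero, ENat.mul_top]
  · rw [← hslope i hi hvi]
    exact_mod_cast Nat.mul_le_mul_right _ (hmin i ⟨hi, hvi⟩)

end Tschirnhaus

section Puiseux

variable {k : Type*} [Field k]

/-- `W` becomes a product of linear factors after some substitution `x = t ^ N`. -/
def PuiseuxSplits (W : k⟦X⟧[X]) : Prop :=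
  ∃ (N : ℕ) (hN : N ≠ 0), (W.map (PowerSeries.expand N hN).toRingHom).Splits

namespace PuiseuxSplits

theorem of_splits {W : k⟦X⟧[X]} (hW : W.Splits) : PuiseuxSplits W :=
  ⟨1, one_ne_zero, hW.map _⟩

theorem of_map_expand {W : k⟦X⟧[X]} {q : ℕ} {hq : q ≠ 0}
    (h : PuiseuxSplits (W.map (PowerSeries.expand q hq).toRingHom)) : PuiseuxSplits W := by
  obtain ⟨M, hM, hsplits⟩ := h
  refine ⟨M * q, mul_ne_zero hM hq, ?_⟩
  rw [PowerSeries.expand_mul_eq_comp M hM q hq]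
  rwa [Polynomial.map_map] at hsplits

theorem mul {P Q : k⟦X⟧[X]} (hP : PuiseuxSplits P) (hQ : PuiseuxSplits Q) :
    PuiseuxSplits (P * Q) := by
  obtain ⟨M, hM, hP⟩ := hP
  obtain ⟨N, hN, hQ⟩ := hQ
  refine of_map_expand (q := M) (hq := hM) ⟨N, hN, ?_⟩
  rw [Polynomial.map_mul, Polynomial.map_mul]
  refine (hP.map _).mul ?_
  have hcomm : (PowerSeries.expand N hN).comp (PowerSeries.expand M hM) =
      (PowerSeries.expand M hM).comp (PowerSeries.expand (R := k) N hN) := by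
    simp only [← PowerSeries.expand_mul_eq_comp, mul_comm]
  have hmap := congrArg (fun φ : k⟦X⟧ →ₐ[k] k⟦X⟧ => Q.map φ.toRingHom) hcomm
  have hQ' := hQ.map (PowerSeries.expand M hM).toRingHom
  rw [Polynomial.map_map] at hQ' ⊢
  exact hmap ▸ hQ'

theorem of_taylor {W : k⟦X⟧[X]} {c : k⟦X⟧} (h : PuiseuxSplits (Polynomial.taylor c W)) :
    PuiseuxSplits W := by
  obtain ⟨M, hM, hsplits⟩ := h
  refine ⟨M, hM, ?_⟩
  have := hsplits.comp_X_add_C (-(PowerSeries.expand M hM).toRingHom c)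
  rwa [← Polynomial.taylor_apply, Polynomial.map_taylor, Polynomial.taylor_taylor, neg_add_cancel,
    Polynomial.taylor_zero] at this

theorem scaleRoots {W : k⟦X⟧[X]} (hW : W.Monic) {s : k⟦X⟧} (h : PuiseuxSplits W) :
    PuiseuxSplits (W.scaleRoots s) := by
  obtain ⟨M, hM, hsplits⟩ := h
  refine ⟨M, hM, ?_⟩
  rw [Polynomial.map_scaleRoots _ _ _ (by simp [hW.leadingCoeff])]
  exact hsplits.scaleRoots _

end PuiseuxSplits

theorem exists_map_expand_eq_scaleRoots {W : k⟦X⟧[X]} (hW : W.Monic)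
    (hne : W ≠ Polynomial.X ^ W.natDegree) :
    ∃ (q : ℕ) (hq : q ≠ 0) (p : ℕ) (U : k⟦X⟧[X]), U.Monic ∧ U.natDegree = W.natDegree ∧
      W.map (PowerSeries.expand q hq).toRingHom = U.scaleRoots (PowerSeries.X ^ p) ∧
      ∃ i < W.natDegree, PowerSeries.constantCoeff (U.coeff i) ≠ 0 := by
  have hlow : ∃ i < W.natDegree, (W.coeff i).order ≠ ⊤ := by
    contrapose! hne
    simp only [PowerSeries.order_eq_top] at hne
    conv_lhs => rw [hW.as_sum, Finset.sum_eq_zero fun i hi => by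
      rw [hne i (Finset.mem_range.1 hi), map_zero, zero_mul], add_zero]
  obtain ⟨p, hle, i, hi, heq⟩ := exists_newtonSlope (fun i => (W.coeff i).order) hlow
  have hq := Nat.factorial_ne_zero W.natDegree
  set W' := W.map (PowerSeries.expand _ hq).toRingHom
  have hW' : W'.Monic := hW.map _
  have hdeg : W'.natDegree = W.natDegree := hW.natDegree_map _
  have hord : ∀ j, (W'.coeff j).order = W.natDegree.factorial • (W.coeff j).order := fun j => by
    rw [Polynomial.coeff_map]
    exact PowerSeries.order_expand _ hq (W.coeff j)
  obtain ⟨U, hU, hUdeg, hWU⟩ := exists_eq_scaleRoots (W := W') hW' (s := PowerSeries.X ^ p) <| by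
    intro j hj
    rw [hdeg] at hj ⊢
    rw [← pow_mul, PowerSeries.X_pow_dvd_iff]
    intro m hm
    refine PowerSeries.coeff_of_lt_order _ (lt_of_lt_of_le ?_ ((hle j hj).trans_eq (hord j).symm))
    exact_mod_cast hm
  refine ⟨_, hq, p, U, hU, hUdeg.trans hdeg, hWU, i, hi, ?_⟩
  rw [Ne, ← PowerSeries.order_ne_zero_iff_constCoeff_eq_zero, not_not]
  have hi' := hord i
  rw [← heq, hWU, Polynomial.coeff_scaleRoots, hUdeg, hdeg, PowerSeries.order_mul, ← pow_mul,
    PowerSeries.order_X_pow] at hi'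
  exact WithTop.add_right_cancel (ENat.natCast_ne_top _) (hi'.trans (zero_add _).symm)

variable [IsAlgClosed k] [CharZero k]

theorem isDistinguishedAt_of_irreducible_of_coeff_eq_zero {U : k⟦X⟧[X]} (hU : U.Monic)
    (hirr : Irreducible U) {n : ℕ} (hn : U.natDegree = n + 1) (h0 : U.coeff n = 0) :
    U.IsDistinguishedAt (IsLocalRing.maximalIdeal k⟦X⟧) := by
  obtain ⟨a, ha⟩ := exists_taylor_isDistinguishedAt hU hirr
  have hcoeff := ha.mem (n := n) (by rw [Polynomial.natDegree_taylor, hn]; exact n.lt_succ_self)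
  rw [coeff_taylor_of_natDegree_eq_succ hU hn, h0, mem_maximalIdeal_iff] at hcoeff
  obtain rfl : a = 0 := by simpa [Nat.cast_add_one_ne_zero] using hcoeff
  simpa using ha

theorem puiseuxSplits_of_monic {W : k⟦X⟧[X]} (hW : W.Monic) : PuiseuxSplits W := by
  induction hn : W.natDegree using Nat.strong_induction_on generalizing W with
  | _ d ih =>
  obtain _ | n := d
  · exact .of_splits (by simp [hW.natDegree_eq_zero.1 hn])
  have hunit : ((n + 1 : ℕ) : k) ≠ 0 := Nat.cast_ne_zero.2 n.succ_ne_zero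
  set c : k⟦X⟧ := PowerSeries.C ((n + 1 : ℕ) : k)⁻¹ * -W.coeff n
  refine .of_taylor (c := c) ?_
  set W' := Polynomial.taylor c W
  have hW' : W'.Monic := (Polynomial.leadingCoeff_taylor c W).trans hW
  have hdeg : W'.natDegree = n + 1 := by rw [Polynomial.natDegree_taylor, hn]
  have hW'n : W'.coeff n = 0 := by
    have hc : ((n : k⟦X⟧) + 1) * c = -W.coeff n := by
      rw [← mul_assoc, ← Nat.cast_succ, ← map_natCast (PowerSeries.C (R := k)), ← map_mul,
        mul_inv_cancel₀ hunit, map_one, one_mul]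
    rw [coeff_taylor_of_natDegree_eq_succ hW hn, hc, add_neg_cancel]
  by_cases hX : W' = Polynomial.X ^ (n + 1)
  · exact .of_splits (hX ▸ Polynomial.Splits.X.pow _)
  obtain ⟨q, hq, p, U, hU, hUdeg, hWU, i, hi, hUi⟩ :=
    exists_map_expand_eq_scaleRoots hW' (hdeg ▸ hX)
  refine .of_map_expand (q := q) (hq := hq) (hWU ▸ .scaleRoots hU ?_)
  rw [hdeg] at hUdeg hi
  have hUn : U.coeff n = 0 := by
    have h := congrArg (Polynomial.coeff · n) hWU
    simpa [hW'n, PowerSeries.X_ne_zero] using h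
  have hred : ¬ Irreducible U := fun hirr => hUi <| (mem_maximalIdeal_iff _).1 <|
    (isDistinguishedAt_of_irreducible_of_coeff_eq_zero hU hirr hUdeg hUn).mem (hUdeg ▸ hi)
  have hU1 : U ≠ 1 := by rintro rfl; simp at hUdeg
  rw [hU.irreducible_iff_natDegree] at hred
  push Not at hred
  obtain ⟨P, Q, hP, hQ, rfl, hP0, hQ0⟩ := hred hU1
  rw [hP.natDegree_mul hQ] at hUdeg
  exact (ih P.natDegree (by lia) hP rfl).mul (ih Q.natDegree (by lia) hQ rfl)

end Puiseux

/-! ### Relative length -/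

section RelLength

variable {R M M' : Type*} [Ring R] [AddCommGroup M'] [Module R M'] [AddCommGroup M] [Module R M]

/-- The length of `T / (P ⊓ T)`, that is, of the image of `T` in `M ⧸ P`; for `P ≤ T` this is the
relative length of `T` over `P`. -/
noncomputable def relLength (P T : Submodule R M) : ℕ∞ := Module.length R (T.map P.mkQ)

theorem length_mono {T T' : Submodule R M} (h : T ≤ T') :
    Module.length R T ≤ Module.length R T' :=
  Module.length_le_of_injective (Submodule.inclusion h) (Submodule.inclusion_injective _)

theorem length_eq_length_inf_ker_add_length_map (T : Submodule R M) (f : M →ₗ[R] M') :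
    Module.length R T =
      Module.length R (T ⊓ LinearMap.ker f : Submodule R M) + Module.length R (T.map f) := by
  refine Module.length_eq_add_of_exact (Submodule.inclusion inf_le_left) (f.submoduleMap T)
    (Submodule.inclusion_injective _) (f.submoduleMap_surjective T) fun x => ?_
  constructor
  · intro hx
    exact ⟨⟨x, x.2, by simpa using congrArg Subtype.val hx⟩, rfl⟩
  · rintro ⟨y, rfl⟩
    exact Subtype.ext y.2.2

variable {P Q T T' : Submodule R M}

theorem relLength_mono_right (h : T ≤ T') : relLength P T ≤ relLength P T' :=
  length_mono (Submodule.map_mono h)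

theorem relLength_eq_length_map (f : M →ₗ[R] M') (hf : LinearMap.ker f = P) :
    relLength P T = Module.length R (T.map f) := by
  subst hf
  have hmap : T.map f =
      (T.map (LinearMap.ker f).mkQ).map ((LinearMap.ker f).liftQ f le_rfl) := by
    rw [← Submodule.map_comp, Submodule.liftQ_mkQ]
  rw [hmap]
  exact LinearEquiv.length_eq <| Submodule.equivMapOfInjective _
    (LinearMap.ker_eq_bot.1 (Submodule.ker_liftQ_eq_bot _ _ _ le_rfl)) _

theorem relLength_eq_length_inf_add (hPQ : P ≤ Q) :
    relLength P T = Module.length R (T.map P.mkQ ⊓ Q.map P.mkQ : Submodule R (M ⧸ P)) +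
      relLength Q T := by
  have h := length_eq_length_inf_ker_add_length_map (T.map P.mkQ)
    (P.liftQ Q.mkQ (by simpa using hPQ))
  rwa [← Submodule.map_comp, Submodule.liftQ_mkQ, Submodule.ker_liftQ, Submodule.ker_mkQ] at h

theorem relLength_add_relLength (hPQ : P ≤ Q) (hQT : Q ≤ T) :
    relLength P Q + relLength Q T = relLength P T := by
  rw [relLength_eq_length_inf_add (T := T) hPQ, inf_eq_right.2 (Submodule.map_mono hQT), relLength]

theorem relLength_map (f : M →ₗ[R] M') (hf : Function.Injective f) :
    relLength (P.map f) (T.map f) = relLength P T := by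
  rw [relLength_eq_length_map (P := P) ((P.map f).mkQ.comp f), relLength, Submodule.map_comp]
  rw [LinearMap.ker_comp, Submodule.ker_mkQ, Submodule.comap_map_eq_of_injective hf]

theorem relLength_map_range (f : M →ₗ[R] M') (hf : LinearMap.ker f ≤ P) :
    relLength (P.map f) (LinearMap.range f) = Module.length R (M ⧸ P) := by
  have hker : LinearMap.ker ((P.map f).mkQ.comp f) = P := by
    rw [LinearMap.ker_comp, Submodule.ker_mkQ, Submodule.comap_map_eq, sup_eq_left.2 hf]
  have h := ((P.map f).mkQ.comp f).quotKerEquivRange.length_eq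
  rw [hker, LinearMap.range_comp] at h
  exact h.symm

theorem relLength_eq_zero : relLength P T = 0 ↔ T ≤ P := by
  rw [relLength, Module.length_eq_zero_iff, Submodule.subsingleton_iff_eq_bot, ← le_bot_iff,
    Submodule.map_le_iff_le_comap, Submodule.comap_bot, Submodule.ker_mkQ]

theorem relLength_add_one_le (h : P ≤ T) (h' : T < T') : relLength P T + 1 ≤ relLength P T' := by
  rw [← relLength_add_relLength h h'.le]
  gcongr
  rw [Order.one_le_iff_ne_zero, Ne, relLength_eq_zero]
  exact h'.not_ge

theorem relLength_eq_length_quotient :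
    relLength P T = Module.length R (T ⧸ P.comap T.subtype) := by
  have hker : LinearMap.ker (P.mkQ.comp T.subtype) = P.comap T.subtype := by
    rw [LinearMap.ker_comp, Submodule.ker_mkQ]
  rw [← hker, (P.mkQ.comp T.subtype).quotKerEquivRange.length_eq, LinearMap.range_comp,
    Submodule.range_subtype, relLength]

theorem relLength_inf_ker (f : M →ₗ[R] M') :
    relLength (T ⊓ LinearMap.ker f) T = Module.length R (T.map f) := by
  have hker : LinearMap.ker (f.comp T.subtype) = (T ⊓ LinearMap.ker f).comap T.subtype := by
    ext x; simp
  rw [relLength_eq_length_quotient, ← hker, (f.comp T.subtype).quotKerEquivRange.length_eq,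
    LinearMap.range_comp, Submodule.range_subtype]

theorem relLength_map_eq_relLength_map (hPT : P ≤ T) (hfin : relLength P T ≠ ⊤) (s : M →ₗ[R] M)
    (hs : Function.Injective s) (hP : P.map s ≤ P) (hT : T.map s ≤ T) :
    relLength (P.map s) P = relLength (T.map s) T := by
  have h := (relLength_add_relLength (Submodule.map_mono (f := s) hPT) hT).trans
    (relLength_add_relLength hP hPT).symm
  rw [relLength_map s hs, add_comm _ (relLength P T)] at h
  exact (ENat.add_right_injective_of_ne_top hfin h).symm

theorem relLength_map_pow_ne_top (s : M →ₗ[R] M) (hs : Function.Injective s) (hP : P.map s ≤ P)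
    (hfin : relLength (P.map s) P ≠ ⊤) (m : ℕ) :
    relLength (P.map (s ^ m)) P ≠ ⊤ ∧ P.map (s ^ m) ≤ P := by
  induction m with
  | zero => simp [Module.End.one_eq_id, relLength_eq_zero.2 le_rfl]
  | succ m ih =>
    have hle : P.map (s ^ (m + 1)) ≤ P.map s := by
      rw [pow_succ', Module.End.mul_eq_comp, Submodule.map_comp]
      exact Submodule.map_mono ih.2
    refine ⟨?_, hle.trans hP⟩
    rw [← relLength_add_relLength hle hP, pow_succ', Module.End.mul_eq_comp, Submodule.map_comp,
      relLength_map s hs]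
    exact WithTop.add_ne_top.2 ⟨ih.1, hfin⟩

theorem relLength_ne_top_of_map_pow_le (s : M →ₗ[R] M) (hs : Function.Injective s)
    (hP : P.map s ≤ P) (hfin : relLength (P.map s) P ≠ ⊤) (m : ℕ) (hm : T.map (s ^ m) ≤ P) :
    relLength P T ≠ ⊤ := by
  have hsm : Function.Injective (s ^ m) := by
    rw [Module.End.coe_pow]
    exact hs.iterate m
  rw [← relLength_map (s ^ m) hsm]
  exact ne_top_of_le_ne_top (relLength_map_pow_ne_top s hs hP hfin m).1 (relLength_mono_right hm)

end RelLength

theorem finite_of_length_ne_top {R M : Type*} [Ring R] [AddCommGroup M] [Module R M]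
    (h : Module.length R M ≠ ⊤) : Module.Finite R M := by
  have := (isFiniteLength_iff_isNoetherian_isArtinian.1 (Module.length_ne_top_iff.1 h)).1
  infer_instance

theorem relLength_inf_ker_dual_le {k M : Type*} [Field k] [AddCommGroup M] [Module k M]
    {P T Q : Submodule k M} (hfin : relLength P T ≠ ⊤) (β : M →ₗ[k] M →ₗ[k] k)
    (hβ : ∀ q ∈ Q, ∀ p ∈ P, β q p = 0) :
    relLength (Q ⊓ LinearMap.ker ((Module.Dual.transpose T.subtype).comp β)) Q ≤
      relLength P T := by
  have hann : Q.map ((Module.Dual.transpose T.subtype).comp β) ≤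
      (P.comap T.subtype).dualAnnihilator := by
    rintro _ ⟨q, hq, rfl⟩
    exact (Submodule.mem_dualAnnihilator _).2 fun w hw => hβ q hq w hw
  rw [relLength_eq_length_quotient (T := T)] at hfin ⊢
  have := finite_of_length_ne_top hfin
  calc relLength _ Q = Module.length k (Q.map _) := relLength_inf_ker _
    _ ≤ Module.length k (P.comap T.subtype).dualAnnihilator := length_mono hann
    _ = Module.length k (Module.Dual k (T ⧸ P.comap T.subtype)) :=
      (Submodule.dualQuotEquivDualAnnihilator _).length_eq.symm
    _ = Module.length k (T ⧸ P.comap T.subtype) := by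
      rw [Module.length_eq_finrank, Module.length_eq_finrank, Subspace.dual_finrank_eq]

/-! ### Intersection lengths -/

section IntersectionLength

theorem length_quotient_eq_add {R M M' : Type*} [Ring R] [AddCommGroup M] [Module R M]
    [AddCommGroup M'] [Module R M'] (P : Submodule R M) (f : M' →ₗ[R] M) :
    Module.length R (M ⧸ P) =
      Module.length R (M' ⧸ P.comap f) + Module.length R (M ⧸ (P ⊔ LinearMap.range f)) := by
  refine Module.length_eq_add_of_exact (Submodule.mapQ _ P f le_rfl)
    (Submodule.factor (le_sup_left : P ≤ P ⊔ LinearMap.range f))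
    (LinearMap.ker_eq_bot.1 ?_) (Submodule.factor_surjective _) (LinearMap.exact_iff.2 ?_)
  · rw [Submodule.ker_mapQ, Submodule.mkQ_map_self]
  · rw [Submodule.range_mapQ, Submodule.factor, Submodule.ker_mapQ, Submodule.comap_id,
      Submodule.map_sup, Submodule.mkQ_map_self, bot_sup_eq]

variable (k : Type*) {A B : Type*} [Field k] [CommRing A] [CommRing B] [Algebra k A] [Algebra k B]

/-- The dimension of `A ⧸ (p, q)` over `k`, which for `A = k⟦x, y⟧` is the intersection multiplicity
of the curves `p = 0` and `q = 0`. It is measured in `ℕ∞`, so that it is `⊤` when the curves share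
a component. -/
noncomputable def intersectionLength (p q : A) : ℕ∞ := Module.length k (A ⧸ Ideal.span {p, q})

theorem intersectionLength_comm (p q : A) :
    intersectionLength k p q = intersectionLength k q p := by
  rw [intersectionLength, intersectionLength, Set.pair_comm]

theorem intersectionLength_mul_isUnit (p q : A) {u : A} (hu : IsUnit u) :
    intersectionLength k (p * u) q = intersectionLength k p q := by
  rw [intersectionLength, intersectionLength, Ideal.span_insert, Ideal.span_insert p,
    Ideal.span_singleton_mul_right_unit hu]

theorem intersectionLength_add_mul (p q c : A) :
    intersectionLength k p (q + p * c) = intersectionLength k p q := by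
  rw [intersectionLength, intersectionLength, mul_comm, Ideal.span_pair_add_mul_left]

theorem intersectionLength_one (q : A) : intersectionLength k 1 q = 0 := by
  rw [intersectionLength, Module.length_eq_zero_iff, Ideal.Quotient.subsingleton_iff]
  exact Ideal.eq_top_of_isUnit_mem _ (Ideal.subset_span (by simp)) isUnit_one

variable {k}

theorem intersectionLength_mul [IsDomain A] {p : A} (q : A) {h : A} (hp : Prime p) (hph : ¬ p ∣ h) :
    intersectionLength k (p * q) h = intersectionLength k p h + intersectionLength k q h := by
  have hcomap : ((Ideal.span {p * q, h}).restrictScalars k).comap (LinearMap.mulLeft k p) =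
      (Ideal.span {q, h}).restrictScalars k := by
    ext z
    simp only [Submodule.mem_comap, LinearMap.mulLeft_apply, Submodule.restrictScalars_mem,
      Ideal.mem_span_pair]
    constructor
    · rintro ⟨a, b, hab⟩
      obtain ⟨c, rfl⟩ := (hp.dvd_or_dvd ⟨z - a * q, by linear_combination hab⟩ :
        p ∣ b ∨ p ∣ h).resolve_right hph
      exact ⟨a, c, mul_left_cancel₀ hp.ne_zero (by linear_combination hab)⟩
    · rintro ⟨a, b, rfl⟩
      exact ⟨a, p * b, by ring⟩
  have hsup : (Ideal.span {p * q, h}).restrictScalars k ⊔ LinearMap.range (LinearMap.mulLeft k p) =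
      (Ideal.span {p, h}).restrictScalars k := by
    ext z
    simp only [Submodule.mem_sup, Submodule.restrictScalars_mem, Ideal.mem_span_pair,
      LinearMap.mem_range, LinearMap.mulLeft_apply]
    constructor
    · rintro ⟨_, ⟨a, b, rfl⟩, _, ⟨c, rfl⟩, rfl⟩
      exact ⟨a * q + c, b, by ring⟩
    · rintro ⟨a, b, rfl⟩
      exact ⟨b * h, ⟨0, b, by ring⟩, p * a, ⟨a, rfl⟩, by ring⟩
  have h := length_quotient_eq_add ((Ideal.span {p * q, h}).restrictScalars k)
    (LinearMap.mulLeft k p)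
  rw [hcomap, hsup, add_comm] at h
  exact h

theorem intersectionLength_eq_length_quotient_of_ker_eq (φ : A →ₐ[k] B) (hφ : Function.Surjective φ)
    {q : A} (hker : RingHom.ker φ = Ideal.span {q}) (p : A) :
    intersectionLength k p q = Module.length k (B ⧸ Ideal.span {φ p}) := by
  let ψ : A →ₐ[k] B ⧸ Ideal.span {φ p} := (Ideal.Quotient.mkₐ k _).comp φ
  have hψ : Function.Surjective ψ := (Ideal.Quotient.mkₐ_surjective k _).comp hφ
  have hker_ψ : RingHom.ker ψ = Ideal.span {p, q} := by
    rw [Ideal.span_insert, ← hker, ← Ideal.comap_map_of_surjective' φ hφ, Ideal.map_span,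
      Set.image_singleton]
    ext a
    exact Ideal.Quotient.eq_zero_iff_mem
  exact (Ideal.quotientEquivAlgOfEq k hker_ψ).toLinearEquiv.length_eq.symm.trans
    (Ideal.quotientKerAlgEquivOfSurjective hψ).toLinearEquiv.length_eq

theorem intersectionLength_congr_of_ker_eq {A' : Type*} [CommRing A'] [Algebra k A']
    (φ : A →ₐ[k] B) (hφ : Function.Surjective φ) (φ' : A' →ₐ[k] B) (hφ' : Function.Surjective φ')
    {p q : A} {p' q' : A'} (hq : RingHom.ker φ = Ideal.span {q})
    (hq' : RingHom.ker φ' = Ideal.span {q'}) (hp : φ p = φ' p') :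
    intersectionLength k p q = intersectionLength k p' q' := by
  rw [intersectionLength_eq_length_quotient_of_ker_eq φ hφ hq, hp,
    intersectionLength_eq_length_quotient_of_ker_eq φ' hφ' hq']

end IntersectionLength

section IntersectionLengthPolynomial

variable {k : Type*} [Field k]

/-- The reduction of polynomials in `y` over `k⟦x⟧` modulo `P`, taken in `k⟦x⟧⟦y⟧`. -/
noncomputable def toQuotient (P : k⟦X⟧[X]) :
    k⟦X⟧[X] →ₐ[k] k⟦X⟧⟦X⟧ ⧸ Ideal.span {(P : k⟦X⟧⟦X⟧)} :=
  (Ideal.Quotient.mkₐ k _).comp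
    { Polynomial.coeToPowerSeries.ringHom with
      commutes' := fun c => by
        simp [PowerSeries.algebraMap_apply] }

theorem toQuotient_apply (P h : k⟦X⟧[X]) :
    toQuotient P h = Ideal.Quotient.mk _ (h : k⟦X⟧⟦X⟧) := rfl

theorem toQuotient_surjective {P : k⟦X⟧[X]}
    (hP : P.IsDistinguishedAt (IsLocalRing.maximalIdeal k⟦X⟧)) :
    Function.Surjective (toQuotient P) :=
  mk_coe_surjective hP

theorem ker_toQuotient {P : k⟦X⟧[X]}
    (hP : P.IsDistinguishedAt (IsLocalRing.maximalIdeal k⟦X⟧)) :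
    RingHom.ker (toQuotient P) = Ideal.span {P} := by
  ext h
  rw [RingHom.mem_ker, toQuotient_apply, Ideal.Quotient.eq_zero_iff_dvd, Ideal.mem_span_singleton]
  refine ⟨dvd_of_coe_dvd_coe hP, ?_⟩
  rintro ⟨q, rfl⟩
  exact ⟨q, Polynomial.coe_mul P q⟩

theorem intersectionLength_coe {P : k⟦X⟧[X]}
    (hP : P.IsDistinguishedAt (IsLocalRing.maximalIdeal k⟦X⟧)) (h : k⟦X⟧[X]) :
    intersectionLength k (P : k⟦X⟧⟦X⟧) h = intersectionLength k P h := by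
  rw [intersectionLength_comm, intersectionLength_comm k P]
  exact intersectionLength_congr_of_ker_eq (Ideal.Quotient.mkₐ k _)
    (Ideal.Quotient.mkₐ_surjective k _) (toQuotient P) (toQuotient_surjective hP)
    (Ideal.Quotient.mkₐ_ker k _) (ker_toQuotient hP) rfl

theorem C_X_dvd_iff (p : k⟦X⟧[X]) :
    Polynomial.C PowerSeries.X ∣ p ↔ p.map (PowerSeries.constantCoeff (R := k)) = 0 := by
  simp only [Polynomial.C_dvd_iff_dvd_coeff, PowerSeries.X_dvd_iff, Polynomial.ext_iff,
    Polynomial.coeff_map, Polynomial.coeff_zero]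

theorem intersectionLength_C_X {W : k⟦X⟧[X]} (hW : W.Monic) :
    intersectionLength k W (Polynomial.C PowerSeries.X) = W.natDegree := by
  let ε : k⟦X⟧ →ₐ[k] k := AlgHom.mk' PowerSeries.constantCoeff fun c v => by simp
  have hsurj : Function.Surjective (Polynomial.mapAlgHom ε) :=
    Polynomial.map_surjective _ PowerSeries.constantCoeff_surj
  have hker : RingHom.ker (Polynomial.mapAlgHom ε) = Ideal.span {Polynomial.C PowerSeries.X} := by
    ext p
    rw [Ideal.mem_span_singleton, C_X_dvd_iff]
    rfl
  have hWm : (Polynomial.mapAlgHom ε W).Monic := hW.map _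
  have : Module.Finite k (k[X] ⧸ Ideal.span {Polynomial.mapAlgHom ε W}) := hWm.finite_quotient
  rw [intersectionLength_eq_length_quotient_of_ker_eq _ hsurj hker, Module.length_eq_finrank,
    finrank_quotient_span_eq_natDegree]
  exact congrArg _ (hW.natDegree_map _)

theorem intersectionLength_C_X_mul {G : k⟦X⟧[X]} (hG : G.Monic) (h : k⟦X⟧[X]) :
    intersectionLength k G (Polynomial.C PowerSeries.X * h) =
      G.natDegree + intersectionLength k G h := by
  have hndvd : ¬ Polynomial.C PowerSeries.X ∣ G := by
    rw [C_X_dvd_iff]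
    exact (hG.map _).ne_zero
  rw [intersectionLength_comm, intersectionLength_mul h
    (Polynomial.prime_C_iff.2 PowerSeries.X_prime) hndvd, intersectionLength_comm,
    intersectionLength_C_X hG, intersectionLength_comm k h]

end IntersectionLengthPolynomial

section IrreducibleFactors

variable {A : Type*} [CommRing A] [IsDomain A]

theorem exists_monic_irreducible_mul_eq [WfDvdMonoid A[X]] {G : A[X]} (hG : G.Monic) (hG1 : G ≠ 1) :
    ∃ L q : A[X], L.Monic ∧ Irreducible L ∧ q.Monic ∧ G = L * q := by
  obtain ⟨L, hL, q, rfl⟩ :=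
    WfDvdMonoid.exists_irreducible_factor (mt hG.isUnit_iff.1 hG1) hG.ne_zero
  have hlead : q.leadingCoeff * L.leadingCoeff = 1 := by
    rw [mul_comm, ← Polynomial.leadingCoeff_mul]
    exact hG
  have hunit : IsUnit (Polynomial.C q.leadingCoeff) :=
    Polynomial.isUnit_C.2 (.of_mul_eq_one _ hlead)
  have hC : Polynomial.C q.leadingCoeff * Polynomial.C L.leadingCoeff = 1 := by
    rw [← Polynomial.C_mul, hlead, Polynomial.C_1]
  refine ⟨Polynomial.C q.leadingCoeff * L, Polynomial.C L.leadingCoeff * q, ?_,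
    (irreducible_isUnit_mul hunit).2 hL, ?_, by linear_combination (-(L * q)) * hC⟩
  · simp [Polynomial.Monic, Polynomial.leadingCoeff_mul, hlead]
  · simp [Polynomial.Monic, Polynomial.leadingCoeff_mul, mul_comm _ q.leadingCoeff, hlead]

theorem intersectionLength_congr_of_irreducible_factors {k : Type*} [Field k] [Algebra k A]
    [UniqueFactorizationMonoid A[X]] {h₁ h₂ : A[X]} {G : A[X]} (hG : G.Monic)
    (h₁_ndvd : ∀ L, L.Monic → Irreducible L → L ∣ G → ¬ L ∣ h₁)
    (h₂_ndvd : ∀ L, L.Monic → Irreducible L → L ∣ G → ¬ L ∣ h₂)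
    (hlen : ∀ L, L.Monic → Irreducible L → L ∣ G →
      intersectionLength k L h₁ = intersectionLength k L h₂) :
    intersectionLength k G h₁ = intersectionLength k G h₂ := by
  induction hd : G.natDegree using Nat.strong_induction_on generalizing G with
  | _ d ih =>
  by_cases hG1 : G = 1
  · rw [hG1, intersectionLength_one, intersectionLength_one]
  obtain ⟨L, q, hL, hLirr, hq, rfl⟩ := exists_monic_irreducible_mul_eq hG hG1
  have hLdvd : L ∣ L * q := dvd_mul_right L q
  have hlt : q.natDegree < d := by
    rw [← hd, hL.natDegree_mul hq]
    exact Nat.lt_add_of_pos_left (hL.natDegree_pos.2 hLirr.ne_one)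
  rw [intersectionLength_mul q hLirr.prime (h₁_ndvd L hL hLirr hLdvd),
    intersectionLength_mul q hLirr.prime (h₂_ndvd L hL hLirr hLdvd), hlen L hL hLirr hLdvd,
    ih q.natDegree hlt hq (fun M hM hM' h => h₁_ndvd M hM hM' (h.mul_left L))
      (fun M hM hM' h => h₂_ndvd M hM hM' (h.mul_left L))
      (fun M hM hM' h => hlen M hM hM' (h.mul_left L)) rfl]

end IrreducibleFactors

/-! ### Puiseux roots -/

section Rescale

variable {k : Type*} [Field k]

theorem expand_injective {N : ℕ} (hN : N ≠ 0) :
    Function.Injective (PowerSeries.expand (R := k) N hN) := by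
  intro a b hab
  ext m
  simpa only [PowerSeries.coeff_expand_mul] using congrArg (PowerSeries.coeff (N * m)) hab

theorem rescale_expand {N : ℕ} (hN : N ≠ 0) {ζ : k} (hζ : ζ ^ N = 1) (a : k⟦X⟧) :
    PowerSeries.rescale ζ (PowerSeries.expand N hN a) = PowerSeries.expand N hN a := by
  ext m
  rw [PowerSeries.coeff_rescale, PowerSeries.coeff_expand]
  split_ifs with hm
  · obtain ⟨j, rfl⟩ := hm
    rw [pow_mul, hζ, one_pow, one_mul]
  · rw [mul_zero]

theorem rescaleAlgHom_comp_rescaleAlgHom {a b : k} (h : b * a = 1) :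
    (PowerSeries.rescaleAlgHom a).comp (PowerSeries.rescaleAlgHom b) = AlgHom.id k k⟦X⟧ := by
  have hcoe (c : k) (f : k⟦X⟧) : PowerSeries.rescaleAlgHom c f = PowerSeries.rescale c f :=
    DFunLike.congr_fun (PowerSeries.coe_rescaleAlgHom c) f
  refine AlgHom.ext fun f => ?_
  rw [AlgHom.comp_apply, hcoe, hcoe, PowerSeries.rescale_rescale, h, PowerSeries.rescale_one]
  rfl

theorem exists_expand_eq_of_rescale_eq {N : ℕ} (hN : N ≠ 0) {ζ : k} (hζ : IsPrimitiveRoot ζ N)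
    {a : k⟦X⟧} (ha : PowerSeries.rescale ζ a = a) : ∃ b, PowerSeries.expand N hN b = a := by
  refine ⟨PowerSeries.mk fun m => PowerSeries.coeff (N * m) a, ?_⟩
  ext m
  rw [PowerSeries.coeff_expand]
  split_ifs with hm
  · rw [PowerSeries.coeff_mk, Nat.mul_div_cancel' hm]
  · have hcoeff := congrArg (PowerSeries.coeff m) ha
    rw [PowerSeries.coeff_rescale] at hcoeff
    have hne : ζ ^ m ≠ 1 := mt (hζ.pow_eq_one_iff_dvd m).1 hm
    exact (eq_zero_of_mul_eq_self_left hne hcoeff).symm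

theorem exists_map_expand_eq_of_map_rescale_eq {N : ℕ} (hN : N ≠ 0) {ζ : k}
    (hζ : IsPrimitiveRoot ζ N) {P : k⟦X⟧[X]} (hP : P.map (PowerSeries.rescale ζ) = P) :
    ∃ p : k⟦X⟧[X], p.map (PowerSeries.expand N hN).toRingHom = P := by
  suffices P ∈ (Polynomial.mapRingHom (PowerSeries.expand N hN).toRingHom).range from this
  rw [Polynomial.mem_map_range]
  intro m
  refine exists_expand_eq_of_rescale_eq hN hζ ?_
  rw [← Polynomial.coeff_map, hP]

theorem associated_X_pow_order {f : k⟦X⟧} (hf : f ≠ 0) :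
    Associated (PowerSeries.X ^ f.order.toNat) f := by
  obtain ⟨u, hu⟩ := PowerSeries.isUnit_divided_by_X_pow_order hf
  exact ⟨u, hu ▸ PowerSeries.X_pow_order_mul_divXPowOrder⟩

end Rescale

/-- The field of formal Laurent series, encoded as the fraction field of `k⟦X⟧`, which makes it
a `k`-algebra and a `k⟦X⟧`-algebra in a compatible way. -/
abbrev LaurentField (k : Type*) [Field k] : Type _ := FractionRing k⟦X⟧

/-- A full set of distinct Puiseux roots of `W`: with `x = t ^ N`, the polynomial `W` becomes the
product of the factors `y - root i (t)`. The primitive root of unity `ζ` is recorded because the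
automorphism `t ↦ ζ t` permutes the roots and has the power series in `x` as fixed ring. -/
structure PuiseuxRoots {k : Type*} [Field k] (W : k⟦X⟧[X]) where
  /-- The ramification index. -/
  N : ℕ
  N_ne_zero : N ≠ 0
  /-- A generator of the group of deck transformations. -/
  ζ : k
  isPrimitiveRoot : IsPrimitiveRoot ζ N
  /-- The roots, as power series in `t`. -/
  root : Fin W.natDegree → k⟦X⟧
  root_injective : Function.Injective root
  map_expand_eq : W.map (PowerSeries.expand N N_ne_zero).toRingHom =
    ∏ i, (Polynomial.X - Polynomial.C (root i))

namespace PuiseuxRoots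

variable {k : Type*} [Field k] {W : k⟦X⟧[X]} (H : PuiseuxRoots W)

/-- Evaluation of a polynomial over `k⟦x⟧` at the `i`-th Puiseux root. -/
noncomputable def evalAt (i : Fin W.natDegree) : k⟦X⟧[X] →ₐ[k] k⟦X⟧ :=
  Polynomial.eval₂AlgHom (PowerSeries.expand H.N H.N_ne_zero) (H.root i) fun _ => Commute.all _ _

theorem evalAt_apply (i : Fin W.natDegree) (p : k⟦X⟧[X]) :
    H.evalAt i p = (p.map (PowerSeries.expand H.N H.N_ne_zero).toRingHom).eval (H.root i) :=
  (Polynomial.eval_map _ _).symm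

theorem evalAt_C_X (i : Fin W.natDegree) :
    H.evalAt i (Polynomial.C PowerSeries.X) = PowerSeries.X ^ H.N := by
  rw [evalAt_apply, Polynomial.map_C, Polynomial.eval_C]
  exact PowerSeries.expand_X _ _

theorem monic (H : PuiseuxRoots W) : W.Monic :=
  Polynomial.monic_of_injective (expand_injective H.N_ne_zero)
    (H.map_expand_eq ▸ Polynomial.monic_prod_X_sub_C _ _)

theorem evalAt_self (i : Fin W.natDegree) : H.evalAt i W = 0 := by
  rw [evalAt_apply, H.map_expand_eq, Polynomial.eval_prod]
  exact Finset.prod_eq_zero (Finset.mem_univ i) (by simp)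

theorem evalAt_modByMonic (i : Fin W.natDegree) (p : k⟦X⟧[X]) :
    H.evalAt i (p %ₘ W) = H.evalAt i p := by
  conv_rhs => rw [← Polynomial.modByMonic_add_div p W]
  rw [map_add, map_mul, H.evalAt_self, zero_mul, add_zero]

theorem forall_evalAt_eq_zero_iff {p : k⟦X⟧[X]} : (∀ i, H.evalAt i p = 0) ↔ W ∣ p := by
  refine ⟨fun hp => ?_, ?_⟩
  · rw [← Polynomial.modByMonic_eq_zero_iff_dvd H.monic]
    rcases eq_or_ne W 1 with rfl | hW
    · exact Polynomial.modByMonic_one p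
    refine (Polynomial.map_eq_zero_iff
      (f := (PowerSeries.expand H.N H.N_ne_zero).toRingHom) (expand_injective H.N_ne_zero)).1 ?_
    refine Polynomial.eq_zero_of_natDegree_lt_card_of_eval_eq_zero _ H.root_injective
      (fun i => ?_) ?_
    · rw [← evalAt_apply, H.evalAt_modByMonic, hp]
    · rw [Fintype.card_fin]
      exact Polynomial.natDegree_map_le.trans_lt (Polynomial.natDegree_modByMonic_lt p H.monic hW)
  · rintro ⟨q, rfl⟩ i
    rw [map_mul, H.evalAt_self, zero_mul]

theorem evalAt_derivative (i : Fin W.natDegree) :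
    H.evalAt i W.derivative = ∏ j ∈ Finset.univ.erase i, (H.root i - H.root j) := by
  have h := Lagrange.eval_nodal_derivative_eval_node_eq (v := H.root) (Finset.mem_univ i)
  rw [Lagrange.eval_nodal, Lagrange.nodal, ← H.map_expand_eq] at h
  rw [evalAt_apply, ← Polynomial.derivative_map, h]

theorem evalAt_derivative_ne_zero (i : Fin W.natDegree) : H.evalAt i W.derivative ≠ 0 := by
  rw [evalAt_derivative, Finset.prod_ne_zero_iff]
  exact fun j hj h => Finset.ne_of_mem_erase hj (H.root_injective (sub_eq_zero.1 h)).symm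

/-- The automorphism `t ↦ ζ t` of `k⟦t⟧`, whose fixed ring is `k⟦x⟧`. -/
noncomputable def conj : k⟦X⟧ ≃ₐ[k] k⟦X⟧ :=
  AlgEquiv.ofAlgHom (PowerSeries.rescaleAlgHom H.ζ) (PowerSeries.rescaleAlgHom H.ζ⁻¹)
    (rescaleAlgHom_comp_rescaleAlgHom
      (inv_mul_cancel₀ (H.isPrimitiveRoot.ne_zero H.N_ne_zero)))
    (rescaleAlgHom_comp_rescaleAlgHom
      (mul_inv_cancel₀ (H.isPrimitiveRoot.ne_zero H.N_ne_zero)))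

theorem conj_apply (a : k⟦X⟧) : H.conj a = PowerSeries.rescale H.ζ a :=
  DFunLike.congr_fun (PowerSeries.coe_rescaleAlgHom H.ζ) a

theorem conj_comp_expand : (H.conj : k⟦X⟧ →+* k⟦X⟧).comp
    (PowerSeries.expand H.N H.N_ne_zero).toRingHom =
      (PowerSeries.expand H.N H.N_ne_zero).toRingHom :=
  RingHom.ext fun a => (H.conj_apply _).trans
    (rescale_expand H.N_ne_zero H.isPrimitiveRoot.pow_eq_one a)

theorem conj_eval_map_expand (a : k⟦X⟧) (p : k⟦X⟧[X]) :
    H.conj ((p.map (PowerSeries.expand H.N H.N_ne_zero).toRingHom).eval a) =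
      (p.map (PowerSeries.expand H.N H.N_ne_zero).toRingHom).eval (H.conj a) := by
  conv_rhs => rw [← H.conj_comp_expand, ← Polynomial.map_map]
  exact (Polynomial.eval_map_apply (H.conj : k⟦X⟧ →+* k⟦X⟧) a).symm

theorem exists_perm :
    ∃ π : Equiv.Perm (Fin W.natDegree), ∀ i, H.conj (H.root i) = H.root (π i) := by
  have hroot (i) : ∃ j, H.conj (H.root i) = H.root j := by
    have h : (W.map (PowerSeries.expand H.N H.N_ne_zero).toRingHom).eval
        (H.conj (H.root i)) = 0 := by
      rw [← conj_eval_map_expand, ← evalAt_apply, H.evalAt_self, map_zero]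
    rw [H.map_expand_eq, Polynomial.eval_prod, Finset.prod_eq_zero_iff] at h
    obtain ⟨j, -, hj⟩ := h
    exact ⟨j, by simpa [sub_eq_zero] using hj⟩
  choose f hf using hroot
  have hinj : Function.Injective f := fun i j hij =>
    H.root_injective (H.conj.injective (by rw [hf, hf, hij]))
  exact ⟨Equiv.ofBijective f hinj.bijective_of_finite, hf⟩

/-- The permutation of the Puiseux roots induced by `t ↦ ζ t`. -/
noncomputable def perm : Equiv.Perm (Fin W.natDegree) := H.exists_perm.choose

theorem conj_root (i : Fin W.natDegree) : H.conj (H.root i) = H.root (H.perm i) :=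
  H.exists_perm.choose_spec i

theorem conj_evalAt (i : Fin W.natDegree) (p : k⟦X⟧[X]) :
    H.conj (H.evalAt i p) = H.evalAt (H.perm i) p := by
  rw [evalAt_apply, evalAt_apply, conj_eval_map_expand, conj_root]

/-- The extension of `conj` to Laurent series. -/
noncomputable def conjFrac : LaurentField k ≃ₐ[k] LaurentField k :=
  IsFractionRing.algEquivOfAlgEquiv H.conj

theorem conjFrac_algebraMap (a : k⟦X⟧) :
    H.conjFrac (algebraMap k⟦X⟧ (LaurentField k) a) = algebraMap _ _ (H.conj a) :=
  IsFractionRing.algEquivOfAlgEquiv_algebraMap H.conj a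

/-- Evaluation of a polynomial at all Puiseux roots simultaneously. -/
noncomputable def evalAll : k⟦X⟧[X] →ₐ[k] Fin W.natDegree → LaurentField k :=
  AlgHom.pi fun i => (IsScalarTower.toAlgHom k k⟦X⟧ (LaurentField k)).comp (H.evalAt i)

theorem evalAll_apply (p : k⟦X⟧[X]) (i : Fin W.natDegree) :
    H.evalAll p i = algebraMap k⟦X⟧ (LaurentField k) (H.evalAt i p) := rfl

theorem evalAll_apply_eq_zero_iff {p : k⟦X⟧[X]} {i : Fin W.natDegree} :
    H.evalAll p i = 0 ↔ H.evalAt i p = 0 := by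
  rw [evalAll_apply, map_eq_zero_iff _ (IsFractionRing.injective _ _)]

theorem evalAll_eq_zero_iff {p : k⟦X⟧[X]} : H.evalAll p = 0 ↔ W ∣ p := by
  rw [← H.forall_evalAt_eq_zero_iff, funext_iff]
  exact forall_congr' fun i => H.evalAll_apply_eq_zero_iff

theorem evalAll_C_X_apply (i : Fin W.natDegree) :
    H.evalAll (Polynomial.C PowerSeries.X) i =
      algebraMap k⟦X⟧ (LaurentField k) (PowerSeries.X ^ H.N) := by
  rw [evalAll_apply, evalAt_C_X]

theorem evalAll_C_X_apply_ne_zero (i : Fin W.natDegree) :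
    H.evalAll (Polynomial.C PowerSeries.X) i ≠ 0 := by
  rw [Ne, evalAll_apply_eq_zero_iff, evalAt_C_X]
  exact pow_ne_zero _ PowerSeries.X_ne_zero

theorem evalAll_derivative_apply_ne_zero (i : Fin W.natDegree) : H.evalAll W.derivative i ≠ 0 :=
  mt H.evalAll_apply_eq_zero_iff.1 (H.evalAt_derivative_ne_zero i)

end PuiseuxRoots

/-! ### The curve ring and its normalization -/

section Scaling

variable {k ι E : Type*} [Field k] [Field E] [Algebra k E] {b : ι → E}

theorem mulLeft_injective_of_forall_ne_zero (hb : ∀ i, b i ≠ 0) :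
    Function.Injective (LinearMap.mulLeft k b) := fun _ _ h =>
  funext fun i => mul_left_cancel₀ (hb i) (congrFun h i)

theorem mem_map_mulLeft_inv (hb : ∀ i, b i ≠ 0) {T : Submodule k (ι → E)} {c : ι → E} :
    c ∈ T.map (LinearMap.mulLeft k b⁻¹) ↔ b * c ∈ T := by
  constructor
  · rintro ⟨d, hd, rfl⟩
    convert! hd using 1
    exact funext fun i => mul_inv_cancel_left₀ (hb i) (d i)
  · exact fun h => ⟨b * c, h, funext fun i => inv_mul_cancel_left₀ (hb i) (c i)⟩

theorem relLength_map_mulLeft_inv (hb : ∀ i, b i ≠ 0) (T : Submodule k (ι → E)) :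
    relLength T (T.map (LinearMap.mulLeft k b⁻¹)) =
      relLength (T.map (LinearMap.mulLeft k b)) T := by
  have hT : (T.map (LinearMap.mulLeft k b⁻¹)).map (LinearMap.mulLeft k b) = T := by
    refine le_antisymm (Submodule.map_le_iff_le_comap.2 fun c => (mem_map_mulLeft_inv hb).1)
      fun c hc => ⟨b⁻¹ * c, ⟨c, hc, rfl⟩, ?_⟩
    exact funext fun i => mul_inv_cancel_left₀ (hb i) (c i)
  rw [← relLength_map _ (mulLeft_injective_of_forall_ne_zero (k := k) hb), hT]

theorem map_mulLeft_toSubmodule_le {A : Type*} [CommRing A] [Algebra k A] {S : Subalgebra k A}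
    {s : A} (hs : s ∈ S) : S.toSubmodule.map (LinearMap.mulLeft k s) ≤ S.toSubmodule :=
  Submodule.map_le_iff_le_comap.2 fun _ => S.mul_mem hs

end Scaling

namespace PuiseuxRoots

variable {k : Type*} [Field k] {W : k⟦X⟧[X]} (H : PuiseuxRoots W)

/-- The ring `k⟦x⟧[y] / (W)`, embedded in a product of Laurent series fields by evaluation at the
Puiseux roots. -/
noncomputable def curveRing : Subalgebra k (Fin W.natDegree → LaurentField k) := H.evalAll.range

/-- The tuples of Laurent series compatible with `t ↦ ζ t`: the total ring of fractions of the
curve ring. -/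
noncomputable def equivariant : Subalgebra k (Fin W.natDegree → LaurentField k) where
  carrier := {b | ∀ i, H.conjFrac (b i) = b (H.perm i)}
  mul_mem' hb hc i := by rw [Pi.mul_apply, map_mul, hb, hc, Pi.mul_apply]
  add_mem' hb hc i := by rw [Pi.add_apply, map_add, hb, hc, Pi.add_apply]
  algebraMap_mem' r _ := H.conjFrac.commutes r

/-- The compatible tuples of power series: the normalization of the curve ring. -/
noncomputable def normalization : Subalgebra k (Fin W.natDegree → LaurentField k) :=
  H.equivariant ⊓ Subalgebra.pi Set.univ fun _ =>
    (IsScalarTower.toAlgHom k k⟦X⟧ (LaurentField k)).range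

variable {b : Fin W.natDegree → LaurentField k}

theorem mem_normalization_iff : b ∈ H.normalization ↔
    b ∈ H.equivariant ∧ ∀ i, IsLocalization.IsInteger k⟦X⟧ (b i) :=
  and_congr_right fun _ => forall_congr' fun i => imp_iff_right (Set.mem_univ i)

theorem exists_conj_eq_of_mem_normalization (hb : b ∈ H.normalization) :
    ∃ c : Fin W.natDegree → k⟦X⟧, (∀ i, algebraMap k⟦X⟧ (LaurentField k) (c i) = b i) ∧
      ∀ i, H.conj (c i) = c (H.perm i) := by
  obtain ⟨hequi, hint⟩ := H.mem_normalization_iff.1 hb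
  choose c hc using hint
  exact ⟨c, hc, fun i => IsFractionRing.injective k⟦X⟧ (LaurentField k)
    (by rw [← conjFrac_algebraMap, hc, hc, hequi])⟩

theorem evalAll_mem_equivariant (p : k⟦X⟧[X]) : H.evalAll p ∈ H.equivariant := fun i => by
  rw [evalAll_apply, conjFrac_algebraMap, conj_evalAt, evalAll_apply]

theorem inv_mem_equivariant (hb : b ∈ H.equivariant) : b⁻¹ ∈ H.equivariant := fun i => by
  rw [Pi.inv_apply, map_inv₀, hb, Pi.inv_apply]

theorem curveRing_le_normalization : H.curveRing ≤ H.normalization := by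
  rintro _ ⟨p, rfl⟩
  exact H.mem_normalization_iff.2 ⟨H.evalAll_mem_equivariant p, fun i => ⟨H.evalAt i p, rfl⟩⟩

theorem evalAll_mem_curveRing (p : k⟦X⟧[X]) : H.evalAll p ∈ H.curveRing := ⟨p, rfl⟩

theorem inv_mul_mem_normalization {p q : k⟦X⟧[X]} (hp : ∀ i, H.evalAt i p ≠ 0)
    (hpq : ∀ i, H.evalAt i p ∣ H.evalAt i q) : (H.evalAll p)⁻¹ * H.evalAll q ∈ H.normalization := by
  refine H.mem_normalization_iff.2 ⟨mul_mem (H.inv_mem_equivariant (H.evalAll_mem_equivariant p))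
    (H.evalAll_mem_equivariant q), fun i => ?_⟩
  obtain ⟨c, hc⟩ := hpq i
  have hpi : H.evalAll p i ≠ 0 := mt H.evalAll_apply_eq_zero_iff.1 (hp i)
  refine ⟨c, ?_⟩
  rw [Pi.mul_apply, Pi.inv_apply, eq_inv_mul_iff_mul_eq₀ hpi, evalAll_apply, evalAll_apply, hc,
    map_mul]

/-- The polynomial of degree `< deg W` that takes the value `c i * W'` at the `i`-th root. -/
noncomputable def lagrangeNumerator (c : Fin W.natDegree → k⟦X⟧) : k⟦X⟧[X] :=
  ∑ i, Polynomial.C (c i) *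
    ∏ j ∈ Finset.univ.erase i, (Polynomial.X - Polynomial.C (H.root j))

theorem eval_lagrangeNumerator (c : Fin W.natDegree → k⟦X⟧) (i : Fin W.natDegree) :
    (H.lagrangeNumerator c).eval (H.root i) = H.evalAt i W.derivative * c i := by
  rw [lagrangeNumerator, Polynomial.eval_finsetSum, Finset.sum_eq_single i, evalAt_derivative]
  · simp [Polynomial.eval_prod, mul_comm]
  · intro j _ hj
    rw [Polynomial.eval_mul, Polynomial.eval_prod,
      Finset.prod_eq_zero (Finset.mem_erase.2 ⟨hj.symm, Finset.mem_univ i⟩) (by simp), mul_zero]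
  · simp

theorem map_rescale_lagrangeNumerator {c : Fin W.natDegree → k⟦X⟧}
    (hc : ∀ i, H.conj (c i) = c (H.perm i)) :
    (H.lagrangeNumerator c).map (PowerSeries.rescale H.ζ) = H.lagrangeNumerator c := by
  have hroot (i) : PowerSeries.rescale H.ζ (H.root i) = H.root (H.perm i) := by
    rw [← conj_apply, conj_root]
  rw [lagrangeNumerator, Polynomial.map_sum]
  refine Fintype.sum_equiv H.perm _ _ fun i => ?_
  rw [Polynomial.map_mul, Polynomial.map_C, ← conj_apply, hc, Polynomial.map_prod]
  congr 1
  exact Finset.prod_equiv H.perm (by simp) fun j _ => by simp [hroot]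

theorem evalAll_derivative_mul_mem_curveRing (hb : b ∈ H.normalization) :
    H.evalAll W.derivative * b ∈ H.curveRing := by
  obtain ⟨c, hc, hconj⟩ := H.exists_conj_eq_of_mem_normalization hb
  obtain ⟨p, hp⟩ := exists_map_expand_eq_of_map_rescale_eq H.N_ne_zero H.isPrimitiveRoot
    (H.map_rescale_lagrangeNumerator hconj)
  refine ⟨p, funext fun i => ?_⟩
  change H.evalAll p i = H.evalAll W.derivative i * b i
  rw [evalAll_apply, evalAt_apply, hp, eval_lagrangeNumerator, map_mul, hc, evalAll_apply]

theorem exists_evalAll_C_X_pow_mul_mem_curveRing : ∃ m : ℕ, ∀ b ∈ H.normalization,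
    H.evalAll (Polynomial.C PowerSeries.X) ^ m * b ∈ H.curveRing := by
  let m (i : Fin W.natDegree) : ℕ := (H.evalAt i W.derivative).order.toNat
  have hdvd (i) : H.evalAt i W.derivative ∣
      H.evalAt i (Polynomial.C PowerSeries.X ^ ∑ j, m j) := by
    rw [map_pow, evalAt_C_X, ← pow_mul]
    refine (associated_X_pow_order (H.evalAt_derivative_ne_zero i)).dvd'.trans (pow_dvd_pow _ ?_)
    exact (Finset.single_le_sum (f := m) (fun _ _ => Nat.zero_le _) (Finset.mem_univ i)).trans
      (Nat.le_mul_of_pos_left _ (Nat.pos_of_ne_zero H.N_ne_zero))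
  refine ⟨∑ i, m i, fun b hb => ?_⟩
  have hmem := H.evalAll_derivative_mul_mem_curveRing
    (mul_mem (H.inv_mul_mem_normalization H.evalAt_derivative_ne_zero hdvd) hb)
  convert! hmem using 1
  funext i
  rw [map_pow, mul_assoc]
  exact (mul_inv_cancel_left₀ (H.evalAll_derivative_apply_ne_zero i) _).symm

theorem intersectionLength_eq_relLength_curveRing (p : k⟦X⟧[X]) :
    intersectionLength k W p =
      relLength (H.curveRing.toSubmodule.map (LinearMap.mulLeft k (H.evalAll p)))
        H.curveRing.toSubmodule := by
  let P : Submodule k k⟦X⟧[X] := (Ideal.span {W, p}).restrictScalars k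
  have hker : LinearMap.ker H.evalAll.toLinearMap ≤ P := fun q hq =>
    Ideal.mem_of_dvd _ (H.evalAll_eq_zero_iff.1 hq) (Ideal.subset_span (by simp))
  have hmap : P.map H.evalAll.toLinearMap =
      H.curveRing.toSubmodule.map (LinearMap.mulLeft k (H.evalAll p)) := by
    apply le_antisymm
    · rintro _ ⟨q, hq, rfl⟩
      obtain ⟨a, c, rfl⟩ := Ideal.mem_span_pair.1 hq
      exact ⟨_, H.evalAll_mem_curveRing c, by simp [H.evalAll_eq_zero_iff.2 dvd_rfl, mul_comm]⟩
    · rintro _ ⟨_, ⟨q, rfl⟩, rfl⟩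
      exact ⟨p * q, Ideal.mul_mem_right _ _ (Ideal.subset_span (by simp)), by simp⟩
  rw [← hmap]
  exact (relLength_map_range _ hker).symm

theorem relLength_curveRing_normalization_ne_top :
    relLength H.curveRing.toSubmodule H.normalization.toSubmodule ≠ ⊤ := by
  obtain ⟨m, hm⟩ := H.exists_evalAll_C_X_pow_mul_mem_curveRing
  refine relLength_ne_top_of_map_pow_le
    (LinearMap.mulLeft k (H.evalAll (Polynomial.C PowerSeries.X)))
    (mulLeft_injective_of_forall_ne_zero H.evalAll_C_X_apply_ne_zero)
    (map_mulLeft_toSubmodule_le (H.evalAll_mem_curveRing _)) ?_ m ?_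
  · rw [← intersectionLength_eq_relLength_curveRing, intersectionLength_C_X H.monic]
    exact ENat.natCast_ne_top _
  · rw [LinearMap.pow_mulLeft]
    exact Submodule.map_le_iff_le_comap.2 hm

theorem intersectionLength_eq_relLength_normalization {p : k⟦X⟧[X]}
    (hp : ∀ i, H.evalAt i p ≠ 0) : intersectionLength k W p =
      relLength (H.normalization.toSubmodule.map (LinearMap.mulLeft k (H.evalAll p)))
        H.normalization.toSubmodule := by
  rw [H.intersectionLength_eq_relLength_curveRing]
  exact relLength_map_eq_relLength_map H.curveRing_le_normalization
    H.relLength_curveRing_normalization_ne_top _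
    (mulLeft_injective_of_forall_ne_zero fun i => mt H.evalAll_apply_eq_zero_iff.1 (hp i))
    (map_mulLeft_toSubmodule_le (H.evalAll_mem_curveRing p))
    (map_mulLeft_toSubmodule_le (H.curveRing_le_normalization (H.evalAll_mem_curveRing p)))

theorem map_mulLeft_normalization_le {p q : k⟦X⟧[X]} (hp : ∀ i, H.evalAt i p ≠ 0)
    (hpq : ∀ i, H.evalAt i p ∣ H.evalAt i q) :
    H.normalization.toSubmodule.map (LinearMap.mulLeft k (H.evalAll q)) ≤
      H.normalization.toSubmodule.map (LinearMap.mulLeft k (H.evalAll p)) := by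
  rintro _ ⟨c, hc, rfl⟩
  refine ⟨_, H.normalization.mul_mem (H.inv_mul_mem_normalization hp hpq) hc, funext fun i => ?_⟩
  rw [LinearMap.mulLeft_apply, mul_assoc]
  exact mul_inv_cancel_left₀ (mt H.evalAll_apply_eq_zero_iff.1 (hp i)) _

theorem intersectionLength_congr_of_associated (H : PuiseuxRoots W) {p q : k⟦X⟧[X]}
    (hp : ∀ i, H.evalAt i p ≠ 0) (hpq : ∀ i, Associated (H.evalAt i p) (H.evalAt i q)) :
    intersectionLength k W p = intersectionLength k W q := by
  have hq (i) : H.evalAt i q ≠ 0 := (hpq i).ne_zero_iff.1 (hp i)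
  rw [H.intersectionLength_eq_relLength_normalization hp,
    H.intersectionLength_eq_relLength_normalization hq,
    (H.map_mulLeft_normalization_le hp fun i => (hpq i).dvd).antisymm
      (H.map_mulLeft_normalization_le hq fun i => (hpq i).dvd')]

end PuiseuxRoots

/-! ### Residue duality -/

theorem exists_residue_functional {k : Type*} [Field k] {N : ℕ} (hN : N ≠ 0) :
    ∃ l : LaurentField k →ₗ[k] k, (∀ a : k⟦X⟧, l (algebraMap _ _ a) = 0) ∧
      l (algebraMap k⟦X⟧ _ (PowerSeries.X ^ N))⁻¹ ≠ 0 := by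
  let O : Submodule k (LaurentField k) :=
    (IsScalarTower.toAlgHom k k⟦X⟧ (LaurentField k)).range.toSubmodule
  have hinj := IsFractionRing.injective k⟦X⟧ (LaurentField k)
  have hX : algebraMap k⟦X⟧ (LaurentField k) (PowerSeries.X ^ N) ≠ 0 :=
    (map_ne_zero_iff _ hinj).2 (pow_ne_zero _ PowerSeries.X_ne_zero)
  have hnotMem : (algebraMap k⟦X⟧ (LaurentField k) (PowerSeries.X ^ N))⁻¹ ∉ O := by
    rintro ⟨a, ha⟩
    have hone : a * PowerSeries.X ^ N = 1 := hinj (by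
      rw [map_mul, map_one, ← eq_mul_inv_iff_mul_eq₀ hX, one_mul]
      exact ha)
    simpa [hN] using congrArg PowerSeries.constantCoeff hone
  obtain ⟨l, hl, hO⟩ := Submodule.exists_dual_map_eq_bot_of_notMem hnotMem inferInstance
  exact ⟨l, fun a => LinearMap.mem_ker.1 (Submodule.map_le_iff_le_comap.1 hO.le ⟨a, rfl⟩), hl⟩

namespace PuiseuxRoots

variable {k : Type*} [Field k] {W : k⟦X⟧[X]} (H : PuiseuxRoots W)

/-- A linear functional on Laurent series that vanishes on power series and not on `x⁻¹`. It plays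
the role of the residue; linearity over `k` and these two values are all that the duality needs. -/
noncomputable def residue : LaurentField k →ₗ[k] k :=
  (exists_residue_functional H.N_ne_zero).choose

theorem residue_algebraMap (a : k⟦X⟧) : H.residue (algebraMap _ _ a) = 0 :=
  (exists_residue_functional H.N_ne_zero).choose_spec.1 a

theorem residue_X_pow_inv_ne_zero :
    H.residue (algebraMap k⟦X⟧ (LaurentField k) (PowerSeries.X ^ H.N))⁻¹ ≠ 0 :=
  (exists_residue_functional H.N_ne_zero).choose_spec.2

/-- The sum of the residues along all Puiseux roots. -/
noncomputable def residueSum : (Fin W.natDegree → LaurentField k) →ₗ[k] k :=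
  H.residue.comp (∑ i, LinearMap.proj i)

theorem residueSum_apply (b : Fin W.natDegree → LaurentField k) :
    H.residueSum b = ∑ i, H.residue (b i) := by
  simp [residueSum]

theorem residueSum_eq_zero_of_mem_normalization {b : Fin W.natDegree → LaurentField k}
    (hb : b ∈ H.normalization) : H.residueSum b = 0 := by
  rw [residueSum_apply]
  refine Finset.sum_eq_zero fun i _ => ?_
  obtain ⟨a, ha⟩ := (H.mem_normalization_iff.1 hb).2 i
  rw [← ha, residue_algebraMap]

-- Lagrange interpolation: the sum is the coefficient of `y ^ (deg W - 1)` in `p mod W`.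
theorem exists_sum_inv_derivative_mul_eq (p : k⟦X⟧[X]) : ∃ a : k⟦X⟧,
    ∑ i, ((H.evalAll W.derivative)⁻¹ * H.evalAll p) i = algebraMap k⟦X⟧ (LaurentField k) a := by
  let P : (LaurentField k)[X] := ((p %ₘ W).map
    (PowerSeries.expand H.N H.N_ne_zero).toRingHom).map (algebraMap k⟦X⟧ (LaurentField k))
  have hdeg : P.degree < (Finset.univ : Finset (Fin W.natDegree)).card := by
    rw [Finset.card_univ, Fintype.card_fin, ← Polynomial.degree_eq_natDegree H.monic.ne_zero]
    exact (Polynomial.degree_map_le.trans Polynomial.degree_map_le).trans_lt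
      (Polynomial.degree_modByMonic_lt p H.monic)
  have hinj : Set.InjOn (fun i => algebraMap k⟦X⟧ (LaurentField k) (H.root i))
      (Finset.univ : Finset (Fin W.natDegree)) := fun i _ j _ hij =>
    H.root_injective (IsFractionRing.injective _ _ hij)
  have hcoeff := Lagrange.coeff_eq_sum hinj hdeg
  rw [Polynomial.coeff_map] at hcoeff
  refine ⟨_, Eq.trans (Finset.sum_congr rfl fun i _ => ?_) hcoeff.symm⟩
  rw [Polynomial.eval_map_apply, ← evalAt_apply, evalAt_modByMonic, ← evalAll_apply,
    Pi.mul_apply, Pi.inv_apply, H.evalAll_apply W.derivative, evalAt_derivative, map_prod, mul_comm,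
    div_eq_mul_inv]
  simp only [map_sub]

theorem residueSum_inv_derivative_mul (p : k⟦X⟧[X]) :
    H.residueSum ((H.evalAll W.derivative)⁻¹ * H.evalAll p) = 0 := by
  obtain ⟨a, ha⟩ := H.exists_sum_inv_derivative_mul_eq p
  rw [residueSum_apply, ← map_sum, ha, residue_algebraMap]

variable {b : Fin W.natDegree → LaurentField k}

theorem isInteger_perm_iff (hb : b ∈ H.equivariant) (i : Fin W.natDegree) :
    IsLocalization.IsInteger k⟦X⟧ (b (H.perm i)) ↔ IsLocalization.IsInteger k⟦X⟧ (b i) := by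
  rw [← hb i]
  constructor
  · rintro ⟨a, ha⟩
    refine ⟨H.conj.symm a, H.conjFrac.injective ?_⟩
    rw [conjFrac_algebraMap, AlgEquiv.apply_symm_apply, ha]
  · rintro ⟨a, ha⟩
    exact ⟨H.conj a, by rw [← conjFrac_algebraMap, ha]⟩

open Classical in
/-- The inverse of a tuple of Laurent series at the entries which are not power series, completed
by zeros. -/
noncomputable def polarInverse (b : Fin W.natDegree → LaurentField k) :
    Fin W.natDegree → LaurentField k :=
  fun i => if IsLocalization.IsInteger k⟦X⟧ (b i) then 0 else (b i)⁻¹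

theorem polarInverse_mem_normalization (hb : b ∈ H.equivariant) :
    polarInverse b ∈ H.normalization := by
  refine H.mem_normalization_iff.2 ⟨fun i => ?_, fun i => ?_⟩
  · by_cases hi : IsLocalization.IsInteger k⟦X⟧ (b i)
    · simp [polarInverse, H.isInteger_perm_iff hb, hi]
    · simp [polarInverse, H.isInteger_perm_iff hb, hi, hb i]
  · unfold polarInverse
    split_ifs with hi
    · exact ⟨0, map_zero _⟩
    · exact (ValuationRing.isInteger_or_isInteger k⟦X⟧ (b i)).resolve_left hi

open Classical in
theorem residueSum_mul_polarInverse (b : Fin W.natDegree → LaurentField k) :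
    H.residueSum ((H.evalAll (Polynomial.C PowerSeries.X))⁻¹ * (b * polarInverse b)) =
      (Finset.univ.filter fun i => ¬ IsLocalization.IsInteger k⟦X⟧ (b i)).card *
        H.residue (algebraMap k⟦X⟧ (LaurentField k) (PowerSeries.X ^ H.N))⁻¹ := by
  rw [residueSum_apply, ← nsmul_eq_mul, ← Finset.sum_const, Finset.sum_filter]
  refine Finset.sum_congr rfl fun i _ => ?_
  by_cases hi : IsLocalization.IsInteger k⟦X⟧ (b i)
  · simp [polarInverse, hi]
  · have hbi : b i ≠ 0 := fun h => hi (h ▸ ⟨0, map_zero _⟩)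
    simp [polarInverse, hi, hbi, evalAll_C_X_apply]

-- If `b = x * q` had entries that are not power series, pairing `q` with the inverses of exactly
-- those entries would give a positive multiple of the residue of `x⁻¹`.
theorem evalAll_C_X_mul_mem_normalization [CharZero k] {q : Fin W.natDegree → LaurentField k}
    (hq : q ∈ H.equivariant) (hres : ∀ w ∈ H.normalization, H.residueSum (q * w) = 0) :
    H.evalAll (Polynomial.C PowerSeries.X) * q ∈ H.normalization := by
  classical
  set b := H.evalAll (Polynomial.C PowerSeries.X) * q
  have hb : b ∈ H.equivariant := mul_mem (H.evalAll_mem_equivariant _) hq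
  have hqb : q = (H.evalAll (Polynomial.C PowerSeries.X))⁻¹ * b :=
    funext fun i => (inv_mul_cancel_left₀ (H.evalAll_C_X_apply_ne_zero i) (q i)).symm
  have hsum := hres _ (H.polarInverse_mem_normalization hb)
  rw [hqb, mul_assoc, residueSum_mul_polarInverse, mul_eq_zero,
    or_iff_left H.residue_X_pow_inv_ne_zero, Nat.cast_eq_zero, Finset.card_eq_zero,
    Finset.filter_eq_empty_iff] at hsum
  exact H.mem_normalization_iff.2 ⟨hb, fun i => not_not.1 (hsum (Finset.mem_univ i))⟩

/-- The fractional ideal dual to the curve ring under the residue pairing: `(W')⁻¹` times the curve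
ring. -/
noncomputable def dualizingModule : Submodule k (Fin W.natDegree → LaurentField k) :=
  H.curveRing.toSubmodule.map (LinearMap.mulLeft k (H.evalAll W.derivative)⁻¹)

theorem mem_dualizingModule_iff :
    b ∈ H.dualizingModule ↔ H.evalAll W.derivative * b ∈ H.curveRing :=
  mem_map_mulLeft_inv H.evalAll_derivative_apply_ne_zero

theorem curveRing_le_dualizingModule : H.curveRing.toSubmodule ≤ H.dualizingModule := fun _ hb =>
  H.mem_dualizingModule_iff.2 (mul_mem (H.evalAll_mem_curveRing _) hb)

theorem dualizingModule_le_equivariant : H.dualizingModule ≤ H.equivariant.toSubmodule := by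
  rintro _ ⟨_, ⟨p, rfl⟩, rfl⟩
  exact H.equivariant.mul_mem (H.inv_mem_equivariant (H.evalAll_mem_equivariant _))
    (H.evalAll_mem_equivariant p)

theorem residueSum_mul_eq_zero {q r : Fin W.natDegree → LaurentField k}
    (hq : q ∈ H.dualizingModule) (hr : r ∈ H.curveRing) : H.residueSum (q * r) = 0 := by
  obtain ⟨_, ⟨p, rfl⟩, rfl⟩ := hq
  obtain ⟨s, rfl⟩ := hr
  have h := H.residueSum_inv_derivative_mul (p * s)
  rwa [map_mul H.evalAll, ← mul_assoc] at h

/-- The compatible tuples with at most a simple pole in `x` whose residues sum to zero. -/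
noncomputable def simplePoleModule : Submodule k (Fin W.natDegree → LaurentField k) :=
  H.normalization.toSubmodule.map
      (LinearMap.mulLeft k (H.evalAll (Polynomial.C PowerSeries.X))⁻¹) ⊓
    LinearMap.ker H.residueSum

theorem mem_simplePoleModule_iff : b ∈ H.simplePoleModule ↔
    H.evalAll (Polynomial.C PowerSeries.X) * b ∈ H.normalization ∧ H.residueSum b = 0 :=
  and_congr_left' (mem_map_mulLeft_inv H.evalAll_C_X_apply_ne_zero)

theorem normalization_le_simplePoleModule :
    H.normalization.toSubmodule ≤ H.simplePoleModule := fun _ hc =>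
  H.mem_simplePoleModule_iff.2 ⟨H.normalization.mul_mem
    (H.curveRing_le_normalization (H.evalAll_mem_curveRing _)) hc,
    H.residueSum_eq_zero_of_mem_normalization hc⟩

theorem relLength_normalization_simplePoleModule_add_one_le [CharZero k]
    (hdeg : W.natDegree ≠ 0) :
    relLength H.normalization.toSubmodule H.simplePoleModule + 1 ≤ W.natDegree := by
  have hlen := relLength_map_mulLeft_inv H.evalAll_C_X_apply_ne_zero H.normalization.toSubmodule
  rw [← H.intersectionLength_eq_relLength_normalization fun i =>
    mt H.evalAll_apply_eq_zero_iff.2 (H.evalAll_C_X_apply_ne_zero i),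
    intersectionLength_C_X H.monic] at hlen
  rw [← hlen]
  refine relLength_add_one_le H.normalization_le_simplePoleModule
    (inf_le_left.lt_of_ne fun heq => ?_)
  have hmem := heq.ge (Submodule.mem_map_of_mem H.normalization.one_mem)
  have hres : H.residueSum ((H.evalAll (Polynomial.C PowerSeries.X))⁻¹ * 1) = 0 := hmem.2
  rw [residueSum_apply] at hres
  simp only [mul_one, Pi.inv_apply, evalAll_C_X_apply, Finset.sum_const, Finset.card_univ,
    Fintype.card_fin, nsmul_eq_mul, mul_eq_zero, Nat.cast_eq_zero] at hres
  exact hres.elim hdeg H.residue_X_pow_inv_ne_zero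

-- The elements of the dualizing module orthogonal to the normalization have at most a simple pole
-- in `x` and residue sum zero, so they exceed the normalization by less than `deg W` dimensions.
theorem intersectionLength_derivative_add_one_le [CharZero k] (H : PuiseuxRoots W)
    (hdeg : W.natDegree ≠ 0) : intersectionLength k W W.derivative + 1 ≤
      2 * relLength H.curveRing.toSubmodule H.normalization.toSubmodule + W.natDegree := by
  set R := H.curveRing.toSubmodule
  set O := H.normalization.toSubmodule
  let β := (LinearMap.mul k (Fin W.natDegree → LaurentField k)).compr₂ H.residueSum
  let Q₀ := H.dualizingModule ⊓ LinearMap.ker ((Module.Dual.transpose O.subtype).comp β)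
  let T := H.simplePoleModule
  have hQ₀ {q : Fin W.natDegree → LaurentField k} : q ∈ Q₀ ↔
      q ∈ H.dualizingModule ∧ ∀ w ∈ H.normalization, H.residueSum (q * w) = 0 :=
    and_congr_right fun _ => LinearMap.ext_iff.trans Subtype.forall
  have hRQ₀ : R ≤ Q₀ := fun r hr => hQ₀.2 ⟨H.curveRing_le_dualizingModule hr, fun w hw =>
    H.residueSum_eq_zero_of_mem_normalization (mul_mem (H.curveRing_le_normalization hr) hw)⟩
  have hQ₀T : Q₀ ≤ T := fun q hq => by
    obtain ⟨hmem, hres⟩ := hQ₀.1 hq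
    refine H.mem_simplePoleModule_iff.2 ⟨?_, by simpa using hres 1 (one_mem _)⟩
    exact H.evalAll_C_X_mul_mem_normalization (H.dualizingModule_le_equivariant hmem) hres
  calc intersectionLength k W W.derivative + 1 = relLength R H.dualizingModule + 1 := by
        rw [H.intersectionLength_eq_relLength_curveRing, dualizingModule,
          relLength_map_mulLeft_inv H.evalAll_derivative_apply_ne_zero]
    _ = relLength R Q₀ + relLength Q₀ H.dualizingModule + 1 := by
        rw [relLength_add_relLength hRQ₀ inf_le_left]
    _ ≤ relLength R T + relLength R O + 1 := by
        gcongr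
        · exact relLength_mono_right hQ₀T
        · exact relLength_inf_ker_dual_le H.relLength_curveRing_normalization_ne_top β
            fun q hq r hr => H.residueSum_mul_eq_zero hq hr
    _ = 2 * relLength R O + (relLength O T + 1) := by
        rw [← relLength_add_relLength H.curveRing_le_normalization
          H.normalization_le_simplePoleModule]
        ring
    _ ≤ 2 * relLength R O + W.natDegree := by
        gcongr
        exact H.relLength_normalization_simplePoleModule_add_one_le hdeg

end PuiseuxRoots

/-! ### The δ-invariant -/

theorem isIntegral_iff_of_ringEquiv {R S A B : Type*} [CommRing R] [CommRing S] [CommRing A]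
    [CommRing B] [Algebra R A] [Algebra S B] (φ : R ≃+* S) (ψ : A ≃+* B)
    (h : ∀ r, ψ (algebraMap R A r) = algebraMap S B (φ r)) {a : A} :
    IsIntegral R a ↔ IsIntegral S (ψ a) := by
  refine ⟨IsIntegral.map_of_comp_eq φ.toRingHom ψ.toRingHom (RingHom.ext fun r => (h r).symm),
    fun ha => ?_⟩
  rw [← ψ.symm_apply_apply a]
  refine ha.map_of_comp_eq φ.symm.toRingHom ψ.symm.toRingHom (RingHom.ext fun s => ?_)
  exact (ψ.symm_apply_eq.2 (by simp [h])).symm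

namespace PuiseuxRoots

variable {k : Type*} [Field k] {W : k⟦X⟧[X]} (H : PuiseuxRoots W)
  {b : Fin W.natDegree → LaurentField k}

theorem curveRing_le_equivariant : H.curveRing ≤ H.equivariant :=
  H.curveRing_le_normalization.trans inf_le_left

-- The indicator of the zeros of `s` lies in the normalization, and its product with a power of `x`
-- is an element of the curve ring that kills `s`.
theorem apply_ne_zero_of_mem_nonZeroDivisors {s : H.curveRing}
    (hs : s ∈ nonZeroDivisors H.curveRing) (i : Fin W.natDegree) :
    (s : Fin W.natDegree → LaurentField k) i ≠ 0 := by
  classical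
  intro hi
  let v (j : Fin W.natDegree) : LaurentField k := if s.1 j = 0 then 1 else 0
  have hv : v ∈ H.normalization := by
    refine H.mem_normalization_iff.2 ⟨fun j => ?_, fun j => ?_⟩
    · have hzero : s.1 (H.perm j) = 0 ↔ s.1 j = 0 := by
        rw [← H.curveRing_le_equivariant s.2, map_eq_zero_iff _ H.conjFrac.injective]
      simp only [v, hzero]
      split_ifs <;> simp
    · simp only [v]
      split_ifs
      exacts [IsLocalization.isInteger_one, IsLocalization.isInteger_zero]
  obtain ⟨m, hm⟩ := H.exists_evalAll_C_X_pow_mul_mem_curveRing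
  have hmul : (⟨_, hm v hv⟩ : H.curveRing) * s = 0 := Subtype.ext <| funext fun j => by
    by_cases hj : s.1 j = 0 <;> simp [v, hj]
  have hcomp := congrFun (congrArg Subtype.val (mem_nonZeroDivisors_iff_right.1 hs _ hmul)) i
  simp only [v, Pi.mul_apply, Pi.pow_apply, hi, if_true, mul_one] at hcomp
  exact pow_ne_zero m (H.evalAll_C_X_apply_ne_zero i) hcomp

theorem exists_isInteger_X_pow_mul (z : LaurentField k) : ∃ m : ℕ, ∀ n ≥ m,
    IsLocalization.IsInteger k⟦X⟧
      (algebraMap k⟦X⟧ (LaurentField k) PowerSeries.X ^ n * z) := by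
  obtain ⟨a, d, hd, rfl⟩ := IsFractionRing.div_surjective (A := k⟦X⟧) z
  have hd₀ : d ≠ 0 := nonZeroDivisors.ne_zero hd
  refine ⟨d.order.toNat, fun n hn => ?_⟩
  obtain ⟨c, hc⟩ := (associated_X_pow_order hd₀).dvd'.trans (pow_dvd_pow PowerSeries.X hn)
  refine ⟨c * a, ?_⟩
  have hd₁ : algebraMap k⟦X⟧ (LaurentField k) d ≠ 0 := by simpa using hd₀
  rw [← map_pow, hc, map_mul, map_mul]
  field_simp

theorem exists_mul_mem_curveRing (hb : b ∈ H.equivariant) :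
    ∃ s ∈ H.curveRing, (∀ i, s i ≠ 0) ∧ b * s ∈ H.curveRing := by
  choose n hn using fun i => exists_isInteger_X_pow_mul (b i)
  obtain ⟨m, hm⟩ := H.exists_evalAll_C_X_pow_mul_mem_curveRing
  let x := H.evalAll (Polynomial.C PowerSeries.X)
  have hx : x ∈ H.curveRing := H.evalAll_mem_curveRing _
  have hnorm : x ^ (∑ i, n i) * b ∈ H.normalization := by
    refine H.mem_normalization_iff.2
      ⟨mul_mem (pow_mem (H.curveRing_le_equivariant hx) _) hb, fun i => ?_⟩
    rw [Pi.mul_apply, Pi.pow_apply, show x i = _ from H.evalAll_C_X_apply i, map_pow,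
      ← pow_mul]
    refine hn i _ ((Finset.single_le_sum (fun _ _ => Nat.zero_le _) (Finset.mem_univ i)).trans ?_)
    exact Nat.le_mul_of_pos_left _ (Nat.pos_of_ne_zero H.N_ne_zero)
  refine ⟨x ^ (m + ∑ i, n i), pow_mem hx _,
    fun i => pow_ne_zero _ (H.evalAll_C_X_apply_ne_zero i), ?_⟩
  rw [mul_comm, pow_add, mul_assoc]
  exact hm _ hnorm

noncomputable instance : Algebra H.curveRing H.equivariant :=
  (Subalgebra.inclusion H.curveRing_le_equivariant).toAlgebra

instance : IsScalarTower k H.curveRing H.equivariant := .of_algebraMap_eq fun _ => rfl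

instance : IsFractionRing H.curveRing H.equivariant where
  map_units s := IsUnit.of_mul_eq_one
    ⟨_, H.inv_mem_equivariant (H.curveRing_le_equivariant s.1.2)⟩ <| Subtype.ext <| funext fun i =>
      mul_inv_cancel₀ (H.apply_ne_zero_of_mem_nonZeroDivisors s.2 i)
  surj b := by
    obtain ⟨s, hs, hs₀, hbs⟩ := H.exists_mul_mem_curveRing b.2
    have hmem : (⟨s, hs⟩ : H.curveRing) ∈ nonZeroDivisors H.curveRing :=
      mem_nonZeroDivisors_iff_right.2 fun r hr => Subtype.ext <| funext fun i =>
        (mul_eq_zero.1 (congrFun (congrArg Subtype.val hr) i)).resolve_right (hs₀ i)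
    exact ⟨⟨⟨_, hbs⟩, ⟨_, hmem⟩⟩, rfl⟩
  exists_of_eq h := ⟨1, by
    rw [Subalgebra.inclusion_injective H.curveRing_le_equivariant h]⟩

theorem isInteger_of_isIntegral (hb : IsIntegral H.curveRing b) (i : Fin W.natDegree) :
    IsLocalization.IsInteger k⟦X⟧ (b i) := by
  have hsurj := H.evalAll.rangeRestrict_surjective
  have hker : RingHom.ker H.evalAll.rangeRestrict ≤ RingHom.ker (H.evalAt i) := fun p hp =>
    H.evalAll_apply_eq_zero_iff.1 (congrFun (congrArg Subtype.val hp) i)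
  let φ : H.curveRing →+* k⟦X⟧ :=
    RingHom.liftOfSurjective H.evalAll.rangeRestrict.toRingHom hsurj ⟨(H.evalAt i).toRingHom, hker⟩
  have hφ (p) : φ (H.evalAll.rangeRestrict p) = H.evalAt i p :=
    RingHom.liftOfRightInverse_comp_apply _ _ _ ⟨_, hker⟩ p
  refine IsIntegrallyClosed.isIntegral_iff.1 (hb.map_of_comp_eq φ
    (Pi.evalRingHom (fun _ => LaurentField k) i) (RingHom.ext fun r => ?_))
  obtain ⟨p, rfl⟩ := hsurj r
  exact congrArg (algebraMap k⟦X⟧ (LaurentField k)) (hφ p)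

-- The coefficients of `∏ (Y - b i)` are invariant under `t ↦ ζ t`, hence are power series in `x`.
theorem isIntegral_of_mem_normalization (hb : b ∈ H.normalization) :
    IsIntegral H.curveRing b := by
  obtain ⟨c, hc, hconj⟩ := H.exists_conj_eq_of_mem_normalization hb
  have hinv : (∏ i, (Polynomial.X - Polynomial.C (c i))).map (PowerSeries.rescale H.ζ) =
      ∏ i, (Polynomial.X - Polynomial.C (c i)) := by
    rw [Polynomial.map_prod]
    refine Fintype.prod_equiv H.perm _ _ fun i => ?_
    rw [Polynomial.map_sub, Polynomial.map_X, Polynomial.map_C, ← conj_apply, hconj]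
  obtain ⟨q, hq⟩ :=
    exists_map_expand_eq_of_map_rescale_eq H.N_ne_zero H.isPrimitiveRoot hinv
  have hmonic : q.Monic := Polynomial.monic_of_injective (expand_injective H.N_ne_zero)
    (hq ▸ Polynomial.monic_prod_X_sub_C _ _)
  let τ : k⟦X⟧ →+* H.curveRing := H.evalAll.rangeRestrict.toRingHom.comp Polynomial.C
  refine ⟨q.map τ, hmonic.map τ, funext fun i => ?_⟩
  have hτ : ((Pi.evalRingHom (fun _ => LaurentField k) i).comp
      (algebraMap H.curveRing (Fin W.natDegree → LaurentField k))).comp τ =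
      (algebraMap k⟦X⟧ (LaurentField k)).comp (PowerSeries.expand H.N H.N_ne_zero).toRingHom := by
    ext1 v
    change algebraMap k⟦X⟧ (LaurentField k) (H.evalAt i (Polynomial.C v)) = _
    rw [evalAt_apply, Polynomial.map_C, Polynomial.eval_C, RingHom.comp_apply]
  calc Pi.evalRingHom (fun _ => LaurentField k) i
        (Polynomial.eval₂ (algebraMap H.curveRing _) b (q.map τ))
      = algebraMap k⟦X⟧ (LaurentField k)
          ((∏ j, (Polynomial.X - Polynomial.C (c j))).eval (c i)) := by
        rw [Polynomial.hom_eval₂, Polynomial.eval₂_map, hτ, Pi.evalRingHom_apply, ← hc,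
          ← Polynomial.hom_eval₂, ← Polynomial.eval_map, hq]
    _ = 0 := by
        rw [Polynomial.eval_prod, Finset.prod_eq_zero (Finset.mem_univ i) (by simp), map_zero]

theorem isIntegral_curveRing_iff {b : H.equivariant} :
    IsIntegral H.curveRing b ↔ (b : Fin W.natDegree → LaurentField k) ∈ H.normalization := by
  let ι : H.equivariant →ₐ[H.curveRing] (Fin W.natDegree → LaurentField k) :=
    { H.equivariant.val with commutes' := fun _ => rfl }
  rw [← isIntegral_algHom_iff ι Subtype.val_injective]
  exact ⟨fun h => H.mem_normalization_iff.2 ⟨b.2, H.isInteger_of_isIntegral h⟩,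
    H.isIntegral_of_mem_normalization⟩

theorem exists_linearMap_integralClosure {R K : Type*} [CommRing R] [Algebra k R] [CommRing K]
    [Algebra R K] [IsFractionRing R K] [Algebra k K] [IsScalarTower k R K]
    (e : R ≃ₐ[k] H.curveRing) :
    ∃ F : integralClosure R K →ₗ[k] Fin W.natDegree → LaurentField k,
      Function.Injective F ∧ LinearMap.range F = H.normalization.toSubmodule ∧
        ∀ r, F (algebraMap R (integralClosure R K) r) = e r := by
  let eK : K ≃ₐ[k] H.equivariant := IsLocalization.algEquivOfAlgEquiv K H.equivariant e
    (MulEquivClass.map_nonZeroDivisors e)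
  have heK (r : R) : eK (algebraMap R K r) = algebraMap H.curveRing H.equivariant (e r) :=
    IsLocalization.algEquivOfAlgEquiv_eq _ r
  have hint (z : K) : IsIntegral R z ↔
      (eK z : Fin W.natDegree → LaurentField k) ∈ H.normalization := by
    rw [← isIntegral_curveRing_iff]
    exact isIntegral_iff_of_ringEquiv e.toRingEquiv eK.toRingEquiv heK
  refine ⟨H.equivariant.val.toLinearMap ∘ₗ eK.toLinearMap ∘ₗ
      ((integralClosure R K).val.restrictScalars k).toLinearMap,
    fun y z h => Subtype.ext (eK.injective (Subtype.ext h)), le_antisymm ?_ fun b hb => ?_,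
    fun r => congrArg Subtype.val (heK r)⟩
  · rintro _ ⟨z, rfl⟩
    exact (hint z).1 z.2
  · have hz : eK (eK.symm ⟨b, hb.1⟩) = ⟨b, hb.1⟩ := eK.apply_symm_apply _
    exact ⟨⟨eK.symm ⟨b, hb.1⟩, (hint _).2 (by rwa [hz])⟩, congrArg Subtype.val hz⟩

theorem length_integralClosure_quotient {R K : Type*} [CommRing R] [Algebra k R] [CommRing K]
    [Algebra R K] [IsFractionRing R K] [Algebra k K] [IsScalarTower k R K]
    (e : R ≃ₐ[k] H.curveRing) :
    Module.length k (integralClosure R K ⧸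
        LinearMap.range (Algebra.linearMap R (integralClosure R K))) =
      relLength H.curveRing.toSubmodule H.normalization.toSubmodule := by
  obtain ⟨F, hinj, hrange, hF⟩ := H.exists_linearMap_integralClosure (K := K) e
  let P : Submodule k (integralClosure R K) :=
    (LinearMap.range (Algebra.linearMap R (integralClosure R K))).restrictScalars k
  have hmap : P.map F = H.curveRing.toSubmodule := by
    apply le_antisymm
    · rintro _ ⟨_, ⟨r, rfl⟩, rfl⟩
      rw [Algebra.linearMap_apply, hF]
      exact (e r).2
    · exact fun b hb => ⟨algebraMap R _ (e.symm ⟨b, hb⟩), ⟨_, rfl⟩, by simp [hF]⟩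
  rw [← hmap, ← hrange, relLength_map_range F (LinearMap.ker_eq_bot.2 hinj ▸ bot_le)]
  exact (Submodule.Quotient.restrictScalarsEquiv k _).length_eq.symm

end PuiseuxRoots

/-! ### Separability -/

section Separability

variable {k : Type*} [Field k]

theorem exists_ringHom_comp_algebraMap_eq {N : ℕ} (hN : N ≠ 0) :
    ∃ φ : LaurentField k →+* LaurentField k, φ.comp (algebraMap k⟦X⟧ (LaurentField k)) =
      (algebraMap k⟦X⟧ (LaurentField k)).comp (PowerSeries.expand N hN).toRingHom :=
  ⟨IsLocalization.map (LaurentField k) _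
    (nonZeroDivisors_le_comap_nonZeroDivisors_of_injective _ (expand_injective hN)),
    IsLocalization.map_comp _⟩

theorem eval_map_expand_ne_zero {N : ℕ} (hN : N ≠ 0) {p q : k⟦X⟧[X]}
    (hpq : IsCoprime (p.map (algebraMap k⟦X⟧ (LaurentField k)))
      (q.map (algebraMap k⟦X⟧ (LaurentField k)))) {a : k⟦X⟧}
    (hp : (p.map (PowerSeries.expand N hN).toRingHom).eval a = 0) :
    (q.map (PowerSeries.expand N hN).toRingHom).eval a ≠ 0 := by
  intro hq
  obtain ⟨φ, hφ⟩ := exists_ringHom_comp_algebraMap_eq (k := k) hN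
  have heval (r : k⟦X⟧[X]) :
      (r.map (algebraMap k⟦X⟧ (LaurentField k))).eval₂ φ (algebraMap _ _ a) =
        algebraMap k⟦X⟧ (LaurentField k)
          ((r.map (PowerSeries.expand N hN).toRingHom).eval a) := by
    rw [Polynomial.eval₂_map, hφ, Polynomial.eval_map, Polynomial.hom_eval₂]
  have hcop := hpq.map (Polynomial.eval₂RingHom φ (algebraMap k⟦X⟧ (LaurentField k) a))
  simp only [Polynomial.coe_eval₂RingHom, heval, hp, hq, map_zero] at hcop
  exact not_isCoprime_zero_zero hcop

theorem separable_map_of_irreducible [CharZero k] {L : k⟦X⟧[X]} (hL : L.Monic)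
    (hirr : Irreducible L) : (L.map (algebraMap k⟦X⟧ (LaurentField k))).Separable := by
  have : CharZero (LaurentField k) :=
    charZero_of_injective_algebraMap (algebraMap k (LaurentField k)).injective
  exact ((hL.irreducible_iff_irreducible_map_fraction_map (K := LaurentField k)).1 hirr).separable

theorem separable_map_prod [CharZero k] {ι : Type*} [Fintype ι] {w : ι → k⟦X⟧[X]}
    (hmonic : ∀ i, (w i).Monic) (hirr : ∀ i, Irreducible (w i)) (hinj : Function.Injective w) :
    ((∏ i, w i).map (algebraMap k⟦X⟧ (LaurentField k))).Separable := by
  rw [Polynomial.map_prod]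
  refine Polynomial.separable_prod (fun i j hij => ?_)
    fun i => separable_map_of_irreducible (hmonic i) (hirr i)
  have hirr' (l) : Irreducible ((w l).map (algebraMap k⟦X⟧ (LaurentField k))) :=
    ((hmonic l).irreducible_iff_irreducible_map_fraction_map (K := LaurentField k)).1 (hirr l)
  refine (hirr' i).coprime_iff_not_dvd.2 fun hdvd => hij (hinj ?_)
  exact Polynomial.map_injective _ (IsFractionRing.injective k⟦X⟧ (LaurentField k))
    (Polynomial.eq_of_monic_of_associated ((hmonic i).map _) ((hmonic j).map _)
      ((hirr' i).associated_of_dvd (hirr' j) hdvd))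

theorem exists_fin_map_univ_eq {α : Type*} (s : Multiset α) {n : ℕ} (hs : s.card = n) :
    ∃ a : Fin n → α, Finset.univ.val.map a = s := by
  subst hs
  induction s using Quotient.inductionOn with
  | h l => exact ⟨l.get, (Fin.univ_val_map _).trans (congrArg _ (List.ofFn_get l))⟩

theorem nonempty_puiseuxRoots [IsAlgClosed k] [CharZero k] {W : k⟦X⟧[X]} (hW : W.Monic)
    (hsep : (W.map (algebraMap k⟦X⟧ (LaurentField k))).Separable) :
    Nonempty (PuiseuxRoots W) := by
  obtain ⟨N, hN, hsplits⟩ := puiseuxSplits_of_monic hW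
  have : NeZero (N : k) := ⟨Nat.cast_ne_zero.2 hN⟩
  obtain ⟨ζ, hζ⟩ := HasEnoughRootsOfUnity.exists_primitiveRoot k N
  have hcard : (W.map (PowerSeries.expand N hN).toRingHom).roots.card = W.natDegree := by
    rw [← hsplits.natDegree_eq_card_roots, hW.natDegree_map]
  obtain ⟨a, ha⟩ := exists_fin_map_univ_eq _ hcard
  have hprod : W.map (PowerSeries.expand N hN).toRingHom =
      ∏ i, (Polynomial.X - Polynomial.C (a i)) := by
    rw [hsplits.eq_prod_roots_of_monic (hW.map _), ← ha, Multiset.map_map]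
    rfl
  refine ⟨⟨N, hN, ζ, hζ, a, fun i j hij => ?_, hprod⟩⟩
  obtain ⟨φ, hφ⟩ := exists_ringHom_comp_algebraMap_eq (k := k) hN
  have hsepN := hsep.map (f := φ)
  rw [Polynomial.map_map, hφ, ← Polynomial.map_map, hprod, Polynomial.map_prod] at hsepN
  simp only [Polynomial.map_sub, Polynomial.map_X, Polynomial.map_C] at hsepN
  exact Polynomial.separable_prod_X_sub_C_iff.1 hsepN (congrArg _ hij)

theorem PuiseuxRoots.evalAt_ne_zero {L : k⟦X⟧[X]} (H : PuiseuxRoots L) (hirr : Irreducible L)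
    {p : k⟦X⟧[X]} (hp : ¬ L ∣ p) (i : Fin L.natDegree) : H.evalAt i p ≠ 0 := by
  have hirr' := (H.monic.irreducible_iff_irreducible_map_fraction_map (K := LaurentField k)).1 hirr
  have hcop := hirr'.coprime_iff_not_dvd.2 fun hdvd =>
    hp (H.monic.isPrimitive.dvd_of_fraction_map_dvd_fraction_map hdvd)
  rw [H.evalAt_apply]
  exact eval_map_expand_ne_zero H.N_ne_zero hcop (H.evalAt_apply i L ▸ H.evalAt_self i)

end Separability

/-! ### Teissier's lemma -/

section Teissier

variable {k : Type*} [Field k]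

theorem map_constantCoeff_eq_X_pow {P : k⟦X⟧[X]}
    (hP : P.IsDistinguishedAt (IsLocalRing.maximalIdeal k⟦X⟧)) :
    P.map (PowerSeries.constantCoeff (R := k)) = Polynomial.X ^ P.natDegree := by
  ext m
  rw [Polynomial.coeff_map, Polynomial.coeff_X_pow]
  rcases lt_trichotomy m P.natDegree with hm | rfl | hm
  · rw [if_neg hm.ne, ← mem_maximalIdeal_iff]
    exact hP.mem hm
  · simp [hP.monic]
  · rw [if_neg hm.ne', Polynomial.coeff_eq_zero_of_natDegree_lt hm, map_zero]

theorem associated_X_mul_derivative [CharZero k] {a : k⟦X⟧} (ha : a ≠ 0)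
    (ha0 : PowerSeries.constantCoeff a = 0) :
    Associated a (PowerSeries.X * PowerSeries.derivative k a) := by
  obtain ⟨u, hu⟩ := associated_X_pow_order ha
  obtain ⟨m, hm⟩ : ∃ m, a.order.toNat = m + 1 := by
    refine Nat.exists_eq_succ_of_ne_zero fun h => ?_
    rw [h, pow_zero, one_mul] at hu
    exact (u.isUnit.map PowerSeries.constantCoeff).ne_zero (hu ▸ ha0)
  rw [hm] at hu
  have hderiv : PowerSeries.X * PowerSeries.derivative k a = PowerSeries.X ^ (m + 1) *
      (((m + 1 : ℕ) : k⟦X⟧) * (u : k⟦X⟧) +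
        PowerSeries.X * PowerSeries.derivative k (u : k⟦X⟧)) := by
    rw [← hu, Derivation.leibniz, Derivation.leibniz_pow, PowerSeries.derivative_X]
    simp only [smul_eq_mul, nsmul_eq_mul, Nat.add_sub_cancel, mul_one]
    ring
  have hunit : IsUnit (((m + 1 : ℕ) : k⟦X⟧) * (u : k⟦X⟧) +
      PowerSeries.X * PowerSeries.derivative k (u : k⟦X⟧)) := by
    have hu0 := u.isUnit.map (PowerSeries.constantCoeff (R := k))
    rw [PowerSeries.isUnit_iff_constantCoeff, map_add, map_mul, map_mul, map_natCast,
      PowerSeries.constantCoeff_X, zero_mul, add_zero]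
    exact (isUnit_iff_ne_zero.2 (Nat.cast_ne_zero.2 m.succ_ne_zero)).mul hu0
  rw [hderiv]
  exact (Associated.symm ⟨u, hu⟩).trans ⟨hunit.unit, rfl⟩

/-- The partial derivative `∂/∂x` on `k⟦x⟧[y]`, acting on each coefficient. -/
noncomputable def xDeriv (k : Type*) [Field k] : Derivation k k⟦X⟧[X] k⟦X⟧[X] :=
  PolynomialModule.equivPolynomialSelf.compDer (PowerSeries.derivative k).mapCoeffs

theorem xDeriv_monomial (n : ℕ) (a : k⟦X⟧) :
    xDeriv k (Polynomial.monomial n a) = Polynomial.monomial n (PowerSeries.derivative k a) := by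
  simp [xDeriv]

theorem derivative_expand {N : ℕ} (hN : N ≠ 0) (a : k⟦X⟧) :
    PowerSeries.derivative k (PowerSeries.expand N hN a) =
      PowerSeries.expand N hN (PowerSeries.derivative k a) *
        ((N : k⟦X⟧) * PowerSeries.X ^ (N - 1)) := by
  rw [PowerSeries.expand_apply, PowerSeries.expand_apply,
    PowerSeries.derivative_subst (PowerSeries.HasSubst.X_pow hN), Derivation.leibniz_pow,
    PowerSeries.derivative_X]
  simp

namespace PuiseuxRoots

variable {L : k⟦X⟧[X]} (H : PuiseuxRoots L)

theorem constantCoeff_evalAt (i : Fin L.natDegree) (p : k⟦X⟧[X]) :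
    PowerSeries.constantCoeff (H.evalAt i p) =
      (p.map PowerSeries.constantCoeff).eval (PowerSeries.constantCoeff (H.root i)) := by
  have hcomp : (PowerSeries.constantCoeff (R := k)).comp
      (PowerSeries.expand H.N H.N_ne_zero).toRingHom = PowerSeries.constantCoeff :=
    RingHom.ext (PowerSeries.constantCoeff_expand H.N H.N_ne_zero)
  rw [evalAt_apply, ← Polynomial.eval_map_apply, Polynomial.map_map, hcomp]

theorem constantCoeff_root_eq_zero {G : k⟦X⟧[X]}
    (hG : G.IsDistinguishedAt (IsLocalRing.maximalIdeal k⟦X⟧)) (hLG : L ∣ G)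
    (i : Fin L.natDegree) : PowerSeries.constantCoeff (H.root i) = 0 := by
  have h := H.constantCoeff_evalAt i G
  rw [H.forall_evalAt_eq_zero_iff.2 hLG i, map_constantCoeff_eq_X_pow hG, Polynomial.eval_pow,
    Polynomial.eval_X, map_zero] at h
  exact eq_zero_of_pow_eq_zero h.symm

theorem derivative_evalAt (i : Fin L.natDegree) (F : k⟦X⟧[X]) :
    PowerSeries.derivative k (H.evalAt i F) =
      H.evalAt i F.derivative * PowerSeries.derivative k (H.root i) +
        H.evalAt i (xDeriv k F) * ((H.N : k⟦X⟧) * PowerSeries.X ^ (H.N - 1)) := by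
  induction F using Polynomial.induction_on' with
  | add p q hp hq => simp only [map_add, hp, hq]; ring
  | monomial n a =>
    have hmon (n : ℕ) (a : k⟦X⟧) : H.evalAt i (Polynomial.monomial n a) =
        PowerSeries.expand H.N H.N_ne_zero a * H.root i ^ n :=
      Polynomial.eval₂_monomial _ _
    rw [xDeriv_monomial, Polynomial.derivative_monomial, hmon, hmon, hmon,
      Derivation.leibniz, Derivation.leibniz_pow, derivative_expand]
    simp only [map_mul, map_natCast, smul_eq_mul, nsmul_eq_mul]
    ring

theorem associated_evalAt_C_X_mul_xDeriv [CharZero k] {F : k⟦X⟧[X]}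
    (hF0 : PowerSeries.constantCoeff (F.coeff 0) = 0) (hLF : L ∣ F.derivative)
    {i : Fin L.natDegree} (hroot : PowerSeries.constantCoeff (H.root i) = 0)
    (hF : H.evalAt i F ≠ 0) :
    Associated (H.evalAt i F) (H.evalAt i (Polynomial.C PowerSeries.X * xDeriv k F)) := by
  have hconst : PowerSeries.constantCoeff (H.evalAt i F) = 0 := by
    rw [constantCoeff_evalAt, hroot, ← Polynomial.coeff_zero_eq_eval_zero, Polynomial.coeff_map,
      hF0]
  have hN : IsUnit (H.N : k⟦X⟧) := by
    rw [PowerSeries.isUnit_iff_constantCoeff, map_natCast, isUnit_iff_ne_zero]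
    exact Nat.cast_ne_zero.2 H.N_ne_zero
  refine (associated_X_mul_derivative hF hconst).trans (Associated.symm ⟨hN.unit, ?_⟩)
  rw [H.derivative_evalAt, H.forall_evalAt_eq_zero_iff.2 hLF i, zero_mul, zero_add, map_mul,
    evalAt_C_X, IsUnit.unit_spec, ← mul_pow_sub_one H.N_ne_zero]
  ring

end PuiseuxRoots

variable [IsAlgClosed k] [CharZero k]

theorem intersectionLength_eq_of_irreducible_dvd_derivative {F G L : k⟦X⟧[X]}
    (hF0 : PowerSeries.constantCoeff (F.coeff 0) = 0)
    (hG : G.IsDistinguishedAt (IsLocalRing.maximalIdeal k⟦X⟧)) (hGF : G ∣ F.derivative)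
    (hL : L.Monic) (hirr : Irreducible L) (hLG : L ∣ G) (hLF : ¬ L ∣ F) :
    ¬ L ∣ Polynomial.C PowerSeries.X * xDeriv k F ∧
      intersectionLength k L F =
        intersectionLength k L (Polynomial.C PowerSeries.X * xDeriv k F) := by
  obtain ⟨H⟩ := nonempty_puiseuxRoots hL (separable_map_of_irreducible hL hirr)
  have hne := H.evalAt_ne_zero hirr hLF
  have hassoc (i) := H.associated_evalAt_C_X_mul_xDeriv hF0 (hLG.trans hGF)
    (H.constantCoeff_root_eq_zero hG hLG i) (hne i)
  refine ⟨fun hdvd => ?_, H.intersectionLength_congr_of_associated hne hassoc⟩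
  let i : Fin L.natDegree := ⟨0, hL.natDegree_pos.2 hirr.ne_one⟩
  exact (hassoc i).ne_zero_iff.1 (hne i) (H.forall_evalAt_eq_zero_iff.2 hdvd i)

-- On each branch of the polar curve `G`, the total derivative of `F` along the branch is
-- `∂F/∂x · dx`, so `F` and `x · ∂F/∂x` have the same order there.
theorem intersectionLength_polar {F G : k⟦X⟧[X]}
    (hF0 : PowerSeries.constantCoeff (F.coeff 0) = 0)
    (hG : G.IsDistinguishedAt (IsLocalRing.maximalIdeal k⟦X⟧)) (hGF : G ∣ F.derivative)
    (hFG : ∀ L, L.Monic → Irreducible L → L ∣ G → ¬ L ∣ F) :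
    intersectionLength k G F = G.natDegree + intersectionLength k G (xDeriv k F) := by
  have hbranch {L : k⟦X⟧[X]} (hL : L.Monic) (hirr : Irreducible L) (hLG : L ∣ G) :=
    intersectionLength_eq_of_irreducible_dvd_derivative hF0 hG hGF hL hirr hLG
      (hFG L hL hirr hLG)
  rw [← intersectionLength_C_X_mul hG.monic]
  exact intersectionLength_congr_of_irreducible_factors hG.monic hFG
    (fun L hL hirr hLG => (hbranch hL hirr hLG).1) fun L hL hirr hLG => (hbranch hL hirr hLG).2

end Teissier

/-! ### The Milnor bound in Weierstrass coordinates -/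

section PolarCurve

variable {A : Type*} [CommRing A] [IsLocalRing A] {W Q : A[X]}

theorem map_residue_mul_eq (hW : W.IsDistinguishedAt (IsLocalRing.maximalIdeal A)) :
    (W * Q).map (IsLocalRing.residue A) =
      Polynomial.X ^ W.natDegree * Q.map (IsLocalRing.residue A) := by
  rw [Polynomial.map_mul]
  exact congrArg (· * _) hW.map_eq_X_pow

theorem map_residue_derivative_ne_zero [CharZero (IsLocalRing.ResidueField A)]
    (hW : W.IsDistinguishedAt (IsLocalRing.maximalIdeal A)) (hdeg : W.natDegree ≠ 0)
    (hQ : IsUnit (Q : A⟦X⟧)) :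
    (W * Q).derivative.map (IsLocalRing.residue A) ≠ 0 := by
  have hQ0 : Q.map (IsLocalRing.residue A) ≠ 0 := fun h =>
    coeff_zero_map_residue_ne_zero hQ (by rw [h, Polynomial.coeff_zero])
  rw [← Polynomial.derivative_map, map_residue_mul_eq hW, Ne, Polynomial.derivative_eq_zero,
    Polynomial.natDegree_mul (pow_ne_zero _ Polynomial.X_ne_zero) hQ0,
    Polynomial.natDegree_X_pow]
  lia

theorem natDegree_le_natDegree_polar_add_one {G R : A[X]}
    (hW : W.IsDistinguishedAt (IsLocalRing.maximalIdeal A))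
    (hG : G.IsDistinguishedAt (IsLocalRing.maximalIdeal A)) (hR : IsUnit (R : A⟦X⟧))
    (hGR : (W * Q).derivative = G * R) : W.natDegree ≤ G.natDegree + 1 := by
  have hdvd : (Polynomial.X : (IsLocalRing.ResidueField A)[X]) ^ (W.natDegree - 1) ∣
      Polynomial.X ^ G.natDegree * R.map (IsLocalRing.residue A) := by
    rw [← map_residue_mul_eq hG, ← hGR, ← Polynomial.derivative_map, map_residue_mul_eq hW]
    exact Polynomial.pow_sub_one_dvd_derivative_of_pow_dvd (dvd_mul_right _ _)
  have hX : ¬ Polynomial.X ∣ R.map (IsLocalRing.residue A) := fun h =>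
    coeff_zero_map_residue_ne_zero hR (Polynomial.X_dvd_iff.1 h)
  have hpow := Polynomial.prime_X.pow_dvd_of_dvd_mul_right _ hX hdvd
  have hle := (pow_dvd_pow_iff Polynomial.X_ne_zero Polynomial.not_isUnit_X).1 hpow
  lia

end PolarCurve

section MilnorBound

variable {k : Type*} [Field k] {W Q G R : k⟦X⟧[X]}

theorem not_dvd_of_irreducible_dvd_polar
    (hsep : (W.map (algebraMap k⟦X⟧ (LaurentField k))).Separable) (hQ : IsUnit (Q : k⟦X⟧⟦X⟧))
    (hG : G.IsDistinguishedAt (IsLocalRing.maximalIdeal k⟦X⟧)) (hGF : G ∣ (W * Q).derivative)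
    {L : k⟦X⟧[X]} (hL : L.Monic) (hirr : Irreducible L) (hLG : L ∣ G) : ¬ L ∣ W * Q := by
  intro hLF
  have hLQ : ¬ L ∣ Q := fun h => hirr.ne_one <|
    eq_one_of_dvd_of_isUnit_coe hG hL hLG
      (isUnit_of_dvd_unit (map_dvd Polynomial.coeToPowerSeries.ringHom h) hQ)
  have hLW : L ∣ W := (hirr.prime.dvd_or_dvd hLF).resolve_right hLQ
  have hLW' : L ∣ W.derivative := by
    have hLF' := hLG.trans hGF
    rw [Polynomial.derivative_mul, dvd_add_left (hLW.mul_right _)] at hLF'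
    exact (hirr.prime.dvd_or_dvd hLF').resolve_right hLQ
  have hirr' := (hL.irreducible_iff_irreducible_map_fraction_map (K := LaurentField k)).1 hirr
  refine hirr'.not_isUnit (hsep.isUnit_of_dvd' (Polynomial.map_dvd _ hLW) ?_)
  rw [Polynomial.derivative_map]
  exact Polynomial.map_dvd _ hLW'

theorem intersectionLength_derivative_eq_polar
    (hW : W.IsDistinguishedAt (IsLocalRing.maximalIdeal k⟦X⟧)) (hQ : IsUnit (Q : k⟦X⟧⟦X⟧))
    (hG : G.IsDistinguishedAt (IsLocalRing.maximalIdeal k⟦X⟧)) (hR : IsUnit (R : k⟦X⟧⟦X⟧))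
    (hGR : (W * Q).derivative = G * R) :
    intersectionLength k W W.derivative = intersectionLength k G (W * Q) := by
  have hpolar : (G : k⟦X⟧⟦X⟧) * R = W.derivative * Q + W * Q.derivative := by
    rw [← Polynomial.coe_mul, ← hGR, Polynomial.derivative_mul]
    push_cast
    rfl
  calc intersectionLength k W W.derivative
      = intersectionLength k ((W.derivative : k⟦X⟧⟦X⟧) * Q) W := by
        rw [← intersectionLength_coe hW, intersectionLength_mul_isUnit _ _ _ hQ,
          intersectionLength_comm]
    _ = intersectionLength k ((G : k⟦X⟧⟦X⟧) * R) ((W : k⟦X⟧⟦X⟧) * Q) := by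
        rw [hpolar, intersectionLength_comm _ _ ((W : k⟦X⟧⟦X⟧) * Q),
          intersectionLength_mul_isUnit _ (W : k⟦X⟧⟦X⟧) _ hQ, intersectionLength_add_mul,
          intersectionLength_comm]
    _ = intersectionLength k G (W * Q) := by
        rw [intersectionLength_mul_isUnit _ _ _ hR, ← Polynomial.coe_mul,
          intersectionLength_coe hG]

variable [IsAlgClosed k] [CharZero k]

theorem PuiseuxRoots.intersectionLength_derivative_xDeriv_le (H : PuiseuxRoots W)
    (hW : W.IsDistinguishedAt (IsLocalRing.maximalIdeal k⟦X⟧)) (hdeg : W.natDegree ≠ 0)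
    (hsep : (W.map (algebraMap k⟦X⟧ (LaurentField k))).Separable) (hQ : IsUnit (Q : k⟦X⟧⟦X⟧)) :
    intersectionLength k ((W * Q).derivative : k⟦X⟧⟦X⟧) (xDeriv k (W * Q) : k⟦X⟧[X]) ≤
      2 * relLength H.curveRing.toSubmodule H.normalization.toSubmodule := by
  have : CharZero (IsLocalRing.ResidueField k⟦X⟧) :=
    charZero_of_injective_algebraMap (algebraMap k (IsLocalRing.ResidueField k⟦X⟧)).injective
  obtain ⟨G, R, hG, hR, hGR⟩ :=
    exists_isDistinguishedAt_mul_eq (map_residue_derivative_ne_zero hW hdeg hQ)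
  have hGF : G ∣ (W * Q).derivative := ⟨R, hGR⟩
  have hF0 : PowerSeries.constantCoeff ((W * Q).coeff 0) = 0 := by
    rw [Polynomial.mul_coeff_zero, map_mul,
      (mem_maximalIdeal_iff _).1 (hW.mem (Nat.pos_of_ne_zero hdeg)), zero_mul]
  have hpolar := intersectionLength_polar hF0 hG hGF fun _ =>
    not_dvd_of_irreducible_dvd_polar hsep hQ hG hGF
  have hle := natDegree_le_natDegree_polar_add_one hW hG hR hGR
  have hbound := H.intersectionLength_derivative_add_one_le hdeg
  rw [intersectionLength_derivative_eq_polar hW hQ hG hR hGR, hpolar] at hbound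
  rw [hGR, Polynomial.coe_mul, intersectionLength_mul_isUnit _ _ _ hR, intersectionLength_coe hG]
  refine (ENat.add_le_add_iff_right (ENat.natCast_ne_top (G.natDegree + 1))).1 ?_
  calc intersectionLength k G (xDeriv k (W * Q)) + (G.natDegree + 1 : ℕ)
      = G.natDegree + intersectionLength k G (xDeriv k (W * Q)) + 1 := by push_cast; ring
    _ ≤ 2 * relLength H.curveRing.toSubmodule H.normalization.toSubmodule + W.natDegree := hbound
    _ ≤ 2 * relLength H.curveRing.toSubmodule H.normalization.toSubmodule +
        (G.natDegree + 1 : ℕ) := by gcongr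

end MilnorBound

/-! ### Linear changes of coordinates -/

theorem derivation_aeval {R A σ : Type*} [CommSemiring R] [CommSemiring A] [Algebra R A] [Fintype σ]
    (D : Derivation R A A) (z : σ → A) (p : MvPolynomial σ R) :
    D (aeval z p) = ∑ i, aeval z (pderiv i p) * D (z i) := by
  classical
  induction p using MvPolynomial.induction_on with
  | C a => simp
  | add p q hp hq => simp only [map_add, hp, hq, add_mul, Finset.sum_add_distrib]
  | mul_X p j hp =>
    have hX (i : σ) : aeval z (pderiv i (X j : MvPolynomial σ R)) = if j = i then 1 else 0 := by
      rw [pderiv_X, Pi.single_apply, apply_ite (aeval z), map_one, map_zero]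
    simp only [Derivation.leibniz, map_mul, map_add, aeval_X, smul_eq_mul, hp, hX, add_mul,
      Finset.sum_add_distrib, mul_ite, mul_one, mul_zero, ite_mul, zero_mul, Finset.sum_ite_eq,
      Finset.mem_univ, if_true, Finset.mul_sum, mul_assoc]

section Coordinates

variable {k : Type*} [Field k]

/-- The images `x₀`, `x₁ + c x₀` of the variables under a shear. -/
noncomputable def shearVars (c : k) : Fin 2 → MvPowerSeries (Fin 2) k :=
  ![MvPowerSeries.X 0, MvPowerSeries.X 1 + MvPowerSeries.C c * MvPowerSeries.X 0]

theorem hasSubst_shearVars (c : k) : MvPowerSeries.HasSubst (shearVars c) := by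
  refine MvPowerSeries.hasSubst_of_constantCoeff_zero fun i => ?_
  fin_cases i <;> simp [shearVars]

/-- The substitution `x₁ ↦ x₁ + c x₀` on two-variable power series. -/
noncomputable def shearHom (c : k) : MvPowerSeries (Fin 2) k →ₐ[k] MvPowerSeries (Fin 2) k :=
  MvPowerSeries.substAlgHom (hasSubst_shearVars c)

theorem shearHom_X_zero (c : k) : shearHom c (MvPowerSeries.X 0) = MvPowerSeries.X 0 :=
  MvPowerSeries.substAlgHom_X (hasSubst_shearVars c) 0

theorem shearHom_X_one (c : k) : shearHom c (MvPowerSeries.X 1) =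
    MvPowerSeries.X 1 + MvPowerSeries.C c * MvPowerSeries.X 0 :=
  MvPowerSeries.substAlgHom_X (hasSubst_shearVars c) 1

theorem shearHom_C (c d : k) : shearHom c (MvPowerSeries.C d) = MvPowerSeries.C d :=
  (shearHom c).commutes d

theorem shearHom_comp_shearHom_neg (c : k) : (shearHom c).comp (shearHom (-c)) = AlgHom.id k _ := by
  have hvars : (fun i => MvPowerSeries.subst (shearVars c) (shearVars (-c) i)) =
      (MvPowerSeries.X : Fin 2 → MvPowerSeries (Fin 2) k) := by
    rw [← MvPowerSeries.coe_substAlgHom (R := k) (hasSubst_shearVars c)]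
    funext i
    fin_cases i
    · exact shearHom_X_zero c
    · change shearHom c (MvPowerSeries.X 1 + MvPowerSeries.C (-c) * MvPowerSeries.X 0) = _
      rw [map_add, map_mul, shearHom_X_one, shearHom_X_zero, shearHom_C, map_neg]
      ring_nf
      rfl
  ext1 p
  have hcomp := MvPowerSeries.subst_comp_subst_apply (hasSubst_shearVars (-c))
    (hasSubst_shearVars c) p
  rw [hvars, MvPowerSeries.subst_self] at hcomp
  simp only [shearHom, AlgHom.comp_apply, MvPowerSeries.substAlgHom_apply, hcomp, id_eq,
    AlgHom.id_apply]

/-- The invertible substitution `x₁ ↦ x₁ + c x₀`. -/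
noncomputable def shear (c : k) : MvPowerSeries (Fin 2) k ≃ₐ[k] MvPowerSeries (Fin 2) k :=
  AlgEquiv.ofAlgHom (shearHom c) (shearHom (-c)) (shearHom_comp_shearHom_neg c)
    (by simpa using shearHom_comp_shearHom_neg (-c))

/-- Two-variable power series as power series in `x₀` over power series in `x₁`. -/
noncomputable def iteratedEquiv (k : Type*) [Field k] : MvPowerSeries (Fin 2) k ≃ₐ[k] k⟦X⟧⟦X⟧ :=
  (MvPowerSeries.renameEquiv k
    ((finSuccEquiv 1).trans (Equiv.ofUnique (Fin 1) Unit).optionCongr)).trans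
    (MvPowerSeries.optionEquivLeft Unit k)

theorem iteratedEquiv_X_zero : iteratedEquiv k (MvPowerSeries.X 0) = PowerSeries.X := by
  change MvPowerSeries.optionEquivLeft Unit k (MvPowerSeries.rename _ _) = _
  rw [MvPowerSeries.rename_X]
  exact MvPowerSeries.optionEquivLeft_X_none

theorem iteratedEquiv_X_one :
    iteratedEquiv k (MvPowerSeries.X 1) = PowerSeries.C PowerSeries.X := by
  change MvPowerSeries.optionEquivLeft Unit k (MvPowerSeries.rename _ _) = _
  rw [MvPowerSeries.rename_X]
  exact MvPowerSeries.optionEquivLeft_X_some _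

theorem iteratedEquiv_C (a : k) :
    iteratedEquiv k (MvPowerSeries.C a) = PowerSeries.C (PowerSeries.C a) := by
  change MvPowerSeries.optionEquivLeft Unit k (MvPowerSeries.rename _ _) = _
  rw [MvPowerSeries.rename_C]
  exact MvPowerSeries.optionEquivLeft_C _

/-- The coordinates `y = x₀`, `x = x₁ - c x₀` on two-variable power series, which become series in
`y` over `k⟦x⟧`. -/
noncomputable def seriesCoords (c : k) : MvPowerSeries (Fin 2) k ≃ₐ[k] k⟦X⟧⟦X⟧ :=
  (shear c).trans (iteratedEquiv k)

/-- The coordinates of `seriesCoords` on polynomials. -/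
noncomputable def polyCoords (c : k) : MvPolynomial (Fin 2) k →ₐ[k] k⟦X⟧[X] :=
  aeval ![Polynomial.X,
    Polynomial.C PowerSeries.X + Polynomial.C (PowerSeries.C c) * Polynomial.X]

theorem polyCoords_C (c a : k) : polyCoords c (C a) = Polynomial.C (PowerSeries.C a) :=
  (polyCoords c).commutes a

theorem polyCoords_X_zero (c : k) : polyCoords c (X 0) = Polynomial.X := by
  simp [polyCoords]

theorem polyCoords_X_one (c : k) : polyCoords c (X 1) =
    Polynomial.C PowerSeries.X + Polynomial.C (PowerSeries.C c) * Polynomial.X := by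
  simp [polyCoords]

theorem seriesCoords_coe (c : k) (p : MvPolynomial (Fin 2) k) :
    seriesCoords c (p : MvPowerSeries (Fin 2) k) = (polyCoords c p : k⟦X⟧⟦X⟧) := by
  induction p using MvPolynomial.induction_on with
  | C a =>
    rw [coe_C, polyCoords_C, Polynomial.coe_C]
    exact (congrArg _ (shearHom_C c a)).trans (iteratedEquiv_C a)
  | add p q hp hq => simp [hp, hq]
  | mul_X p i hp =>
    have hX : seriesCoords c (MvPowerSeries.X i) = (polyCoords c (X i) : k⟦X⟧⟦X⟧) := by
      change iteratedEquiv k (shearHom c _) = _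
      fin_cases i
      · simp [shearHom_X_zero, iteratedEquiv_X_zero, polyCoords_X_zero]
      · simp [shearHom_X_one, iteratedEquiv_X_zero, iteratedEquiv_X_one, iteratedEquiv_C,
          polyCoords_X_one]
    simp [hp, hX]

theorem derivative_polyCoords (c : k) (f : MvPolynomial (Fin 2) k) :
    (polyCoords c f).derivative = polyCoords c (pderiv 0 f) +
      polyCoords c (pderiv 1 f) * Polynomial.C (PowerSeries.C c) := by
  refine (derivation_aeval (Polynomial.derivative'.restrictScalars k) _ f).trans ?_
  simp [polyCoords]

theorem xDeriv_polyCoords (c : k) (f : MvPolynomial (Fin 2) k) :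
    xDeriv k (polyCoords c f) = polyCoords c (pderiv 1 f) := by
  have hC (a : k⟦X⟧) : xDeriv k (Polynomial.C a) = Polynomial.C (PowerSeries.derivative k a) :=
    xDeriv_monomial 0 a
  have hX : xDeriv k Polynomial.X = 0 := by
    rw [← Polynomial.monomial_one_one_eq_X, xDeriv_monomial, Derivation.map_one_eq_zero, map_zero]
  refine (derivation_aeval (xDeriv k) _ f).trans ?_
  simp [polyCoords, hC, hX]

theorem intersectionLength_pderiv (c : k) (f : MvPolynomial (Fin 2) k) :
    intersectionLength k (↑(pderiv 0 f) : MvPowerSeries (Fin 2) k) ↑(pderiv 1 f) =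
      intersectionLength k ((polyCoords c f).derivative : k⟦X⟧⟦X⟧)
        (xDeriv k (polyCoords c f) : k⟦X⟧[X]) := by
  rw [xDeriv_polyCoords, derivative_polyCoords, Polynomial.coe_add, Polynomial.coe_mul,
    intersectionLength_comm k (_ + _), intersectionLength_add_mul, ← seriesCoords_coe,
    ← seriesCoords_coe, intersectionLength_comm]
  refine (Ideal.quotientEquivAlg _ _ (seriesCoords c) ?_).toLinearEquiv.length_eq
  rw [Ideal.map_span, Set.image_pair]
  rfl

theorem eval_map_polyCoords (c y : k) (f : MvPolynomial (Fin 2) k) :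
    ((polyCoords c f).map PowerSeries.constantCoeff).eval y = eval ![y, c * y] f := by
  induction f using MvPolynomial.induction_on with
  | C a => simp
  | add p q hp hq => simp [hp, hq]
  | mul_X p i hp => fin_cases i <;> simp [hp, polyCoords_X_zero, polyCoords_X_one]

theorem exists_map_polyCoords_ne_zero [Infinite k] {f : MvPolynomial (Fin 2) k} (hf : f ≠ 0) :
    ∃ c, (polyCoords c f).map (PowerSeries.constantCoeff (R := k)) ≠ 0 := by
  by_contra! hzero
  have hline (c y : k) : eval ![y, c * y] f = 0 := by
    rw [← eval_map_polyCoords, hzero, Polynomial.eval_zero]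
  refine mul_ne_zero hf (X_ne_zero 0) (MvPolynomial.funext fun v => ?_)
  rw [map_mul, eval_X, map_zero, mul_eq_zero, or_iff_not_imp_right]
  intro hv
  have hv' : ![v 0, v 1 / v 0 * v 0] = v := by
    rw [div_mul_cancel₀ _ hv]
    ext i
    fin_cases i <;> rfl
  rw [← hv', hline]

end Coordinates

/-! ### Reduction to Weierstrass coordinates -/

section Reduction

variable {k : Type*} [Field k]

theorem isDistinguishedAt_prod {A ι : Type*} [CommRing A] [IsLocalRing A] (s : Finset ι)
    {w : ι → A[X]} (hw : ∀ i, (w i).IsDistinguishedAt (IsLocalRing.maximalIdeal A)) :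
    (∏ i ∈ s, w i).IsDistinguishedAt (IsLocalRing.maximalIdeal A) := by
  refine Finset.prod_induction w (·.IsDistinguishedAt (IsLocalRing.maximalIdeal A))
    (fun _ _ => Polynomial.IsDistinguishedAt.mul) ?_ fun i _ => hw i
  exact ⟨⟨fun hn => by simp at hn⟩, Polynomial.monic_one⟩

theorem exists_separable_isDistinguishedAt_mul_eq [CharZero k] {ι : Type*} [Fintype ι] [Nonempty ι]
    {F : k⟦X⟧[X]} (hF : F.map (PowerSeries.constantCoeff (R := k)) ≠ 0) {u : k⟦X⟧⟦X⟧}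
    (hu : IsUnit u) {γ : ι → k⟦X⟧⟦X⟧} (hirr : ∀ i, Irreducible (γ i))
    (hna : ∀ i j, i ≠ j → ¬ Associated (γ i) (γ j)) (hFγ : (F : k⟦X⟧⟦X⟧) = u * ∏ i, γ i) :
    ∃ W Q : k⟦X⟧[X], W.IsDistinguishedAt (IsLocalRing.maximalIdeal k⟦X⟧) ∧ W.natDegree ≠ 0 ∧
      (W.map (algebraMap k⟦X⟧ (LaurentField k))).Separable ∧ IsUnit (Q : k⟦X⟧⟦X⟧) ∧
      F = W * Q := by
  have hγ (i) : (γ i).map (IsLocalRing.residue k⟦X⟧) ≠ 0 := fun hi => hF <| by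
    rw [map_residue_eq_zero_iff] at hi
    rw [← Polynomial.coe_eq_zero_iff, Polynomial.polynomial_map_coe, hFγ, map_mul, map_prod,
      Finset.prod_eq_zero (Finset.mem_univ i) hi, mul_zero]
  choose w hdist hwirr hassoc using fun i => exists_isDistinguishedAt_associated (hirr i) (hγ i)
  have hinj : Function.Injective w := fun i j hij => by
    by_contra hne
    exact hna i j hne ((hassoc i).symm.trans (hij ▸ hassoc j))
  have hW := isDistinguishedAt_prod Finset.univ hdist
  obtain ⟨v, hv⟩ : Associated ((∏ i, w i : k⟦X⟧[X]) : k⟦X⟧⟦X⟧) F := by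
    have hcoe := map_prod Polynomial.coeToPowerSeries.ringHom w Finset.univ
    rw [Polynomial.coeToPowerSeries.ringHom_apply] at hcoe
    rw [hcoe, hFγ]
    exact (Associated.prod _ _ _ fun i _ => hassoc i).trans
      ((associated_isUnit_mul_right_iff hu).2 (Associated.refl _))
  obtain ⟨Q, rfl⟩ := dvd_of_coe_dvd_coe hW ⟨v, hv.symm⟩
  have hQ : (Q : k⟦X⟧⟦X⟧) = v := by
    have hW0 : ((∏ i, w i : k⟦X⟧[X]) : k⟦X⟧⟦X⟧) ≠ 0 := by simpa using hW.monic.ne_zero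
    exact mul_left_cancel₀ hW0 (by rw [hv, Polynomial.coe_mul])
  refine ⟨∏ i, w i, Q, hW, fun hdeg => ?_,
    separable_map_prod (fun i => (hdist i).monic) hwirr hinj, hQ ▸ v.isUnit, rfl⟩
  obtain ⟨i⟩ := ‹Nonempty ι›
  exact (hwirr i).not_isUnit <| isUnit_of_dvd_one <|
    hW.monic.natDegree_eq_zero.1 hdeg ▸ Finset.dvd_prod_of_mem w (Finset.mem_univ i)

/-- Both rings are the quotient of `k⟦x⟧[y]` by `W`. -/
noncomputable def PuiseuxRoots.quotientEquivCurveRing {W : k⟦X⟧[X]} (H : PuiseuxRoots W)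
    (hW : W.IsDistinguishedAt (IsLocalRing.maximalIdeal k⟦X⟧)) :
    (k⟦X⟧⟦X⟧ ⧸ Ideal.span {(W : k⟦X⟧⟦X⟧)}) ≃ₐ[k] H.curveRing :=
  (Ideal.quotientKerAlgEquivOfSurjective (toQuotient_surjective hW)).symm.trans <|
    (Ideal.quotientEquivAlgOfEq k (by
      ext p
      rw [ker_toQuotient hW, Ideal.mem_span_singleton, RingHom.mem_ker]
      exact H.evalAll_eq_zero_iff.symm)).trans (Ideal.quotientKerEquivRange H.evalAll)

theorem map_seriesCoords_span_singleton {c : k} {f : MvPolynomial (Fin 2) k} {W Q : k⟦X⟧[X]}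
    (hQ : IsUnit (Q : k⟦X⟧⟦X⟧)) (hWQ : polyCoords c f = W * Q) :
    Ideal.span {(W : k⟦X⟧⟦X⟧)} =
      (Ideal.span {(f : MvPowerSeries (Fin 2) k)}).map (seriesCoords c : _ →+* k⟦X⟧⟦X⟧) := by
  rw [Ideal.map_span, Set.image_singleton]
  change _ = Ideal.span {seriesCoords c f}
  rw [seriesCoords_coe, hWQ, Polynomial.coe_mul, Ideal.span_singleton_mul_right_unit hQ]

theorem finrank_quotient_le_of_le {A : Type*} [CommRing A] [Algebra k A] {I J : Ideal A}
    (hIJ : I ≤ J) [Module.Finite k (A ⧸ I)] :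
    Module.finrank k (A ⧸ J) ≤ Module.finrank k (A ⧸ I) :=
  LinearMap.finrank_le_finrank_of_surjective (f := (Ideal.Quotient.factorₐ k hIJ).toLinearMap)
    (Ideal.Quotient.factor_surjective hIJ)

variable [CharZero k] {f : MvPolynomial (Fin 2) k} {ι : Type*} [Fintype ι] [Nonempty ι]
  {u : MvPowerSeries (Fin 2) k} {g : ι → MvPowerSeries (Fin 2) k}

theorem exists_weierstrass_coordinates (hu : IsUnit u) (hirr : ∀ i, Irreducible (g i))
    (hna : ∀ i j, i ≠ j → ¬ Associated (g i) (g j))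
    (hF : (f : MvPowerSeries (Fin 2) k) = u * ∏ i, g i) :
    ∃ (c : k) (W Q : k⟦X⟧[X]), W.IsDistinguishedAt (IsLocalRing.maximalIdeal k⟦X⟧) ∧
      W.natDegree ≠ 0 ∧ (W.map (algebraMap k⟦X⟧ (LaurentField k))).Separable ∧
      IsUnit (Q : k⟦X⟧⟦X⟧) ∧ polyCoords c f = W * Q := by
  have hf : f ≠ 0 := by
    rintro rfl
    rw [MvPolynomial.coe_zero, eq_comm] at hF
    exact mul_ne_zero hu.ne_zero (Finset.prod_ne_zero_iff.2 fun i _ => (hirr i).ne_zero) hF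
  have : Infinite k := CharZero.infinite k
  obtain ⟨c, hc⟩ := exists_map_polyCoords_ne_zero hf
  refine ⟨c, exists_separable_isDistinguishedAt_mul_eq hc (hu.map (seriesCoords c))
    (γ := fun i => seriesCoords c (g i))
    (fun i => (MulEquiv.irreducible_iff (seriesCoords c)).2 (hirr i)) (fun i j hij h => ?_) ?_⟩
  · exact hna i j hij (by simpa using h.map (seriesCoords c).symm)
  · rw [← seriesCoords_coe, hF, map_mul, map_prod]

theorem intersectionLength_pderiv_le_two_mul_length [IsAlgClosed k] (hu : IsUnit u)
    (hirr : ∀ i, Irreducible (g i)) (hna : ∀ i j, i ≠ j → ¬ Associated (g i) (g j))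
    (hF : (f : MvPowerSeries (Fin 2) k) = u * ∏ i, g i)
    {R : Type*} [CommRing R] [Algebra k R]
    (e : (MvPowerSeries (Fin 2) k ⧸ Ideal.span {(f : MvPowerSeries (Fin 2) k)}) ≃ₐ[k] R)
    (K : Type*) [CommRing K] [Algebra R K] [IsFractionRing R K] [Algebra k K]
    [IsScalarTower k R K] :
    Module.length k (integralClosure R K ⧸
        LinearMap.range (Algebra.linearMap R (integralClosure R K))) ≠ ⊤ ∧
      intersectionLength k (↑(pderiv 0 f) : MvPowerSeries (Fin 2) k) ↑(pderiv 1 f) ≤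
        2 * Module.length k (integralClosure R K ⧸
          LinearMap.range (Algebra.linearMap R (integralClosure R K))) := by
  obtain ⟨c, W, Q, hW, hdeg, hsep, hQ, hWQ⟩ := exists_weierstrass_coordinates hu hirr hna hF
  obtain ⟨H⟩ := nonempty_puiseuxRoots hW.monic hsep
  have eR : R ≃ₐ[k] H.curveRing := e.symm.trans <|
    (Ideal.quotientEquivAlg _ _ (seriesCoords c) (map_seriesCoords_span_singleton hQ hWQ)).trans
      (H.quotientEquivCurveRing hW)
  rw [H.length_integralClosure_quotient eR, intersectionLength_pderiv c f, hWQ]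
  exact ⟨H.relLength_curveRing_normalization_ne_top,
    H.intersectionLength_derivative_xDeriv_le hW hdeg hsep hQ⟩

end Reduction

end PlaneCurve

open PlaneCurve in
theorem tjurina_le_milnor_le_two_delta_general {k : Type*} [Field k] [IsAlgClosed k] [CharZero k]
    (f : MvPolynomial (Fin 2) k) {ι : Type*} [Fintype ι] [Nonempty ι]
    (u : (MvPowerSeries (Fin 2) k)ˣ) (g : ι → MvPowerSeries (Fin 2) k)
    (hirr : ∀ i, Irreducible (g i)) (hna : ∀ i j, i ≠ j → ¬ Associated (g i) (g j))
    (hF : (f : MvPowerSeries (Fin 2) k) = u * ∏ i, g i)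
    {R : Type*} [CommRing R] [Algebra k R]
    (e : (MvPowerSeries (Fin 2) k ⧸ Ideal.span {(f : MvPowerSeries (Fin 2) k)}) ≃ₐ[k] R)
    (K : Type*) [CommRing K] [Algebra R K] [IsFractionRing R K] [Algebra k K]
    [IsScalarTower k R K] :
    Module.finrank k (MvPowerSeries (Fin 2) k ⧸ Ideal.span
        {(f : MvPowerSeries (Fin 2) k), ↑(pderiv 0 f), ↑(pderiv 1 f)}) ≤
      Module.finrank k (MvPowerSeries (Fin 2) k ⧸ Ideal.span
        {(↑(pderiv 0 f) : MvPowerSeries (Fin 2) k), ↑(pderiv 1 f)}) ∧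
    Module.finrank k (MvPowerSeries (Fin 2) k ⧸ Ideal.span
        {(↑(pderiv 0 f) : MvPowerSeries (Fin 2) k), ↑(pderiv 1 f)}) ≤
      2 * Module.finrank k (integralClosure R K ⧸
        LinearMap.range (Algebra.linearMap R (integralClosure R K))) := by
  obtain ⟨hdelta, hmilnor⟩ :=
    intersectionLength_pderiv_le_two_mul_length u.isUnit hirr hna hF e K
  have hfinite_delta := finite_of_length_ne_top hdelta
  have hfinite_milnor := finite_of_length_ne_top
    (ne_top_of_le_ne_top (WithTop.mul_ne_top (ENat.natCast_ne_top 2) hdelta) hmilnor)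
  refine ⟨finrank_quotient_le_of_le (Ideal.span_mono (Set.subset_insert _ _)), ?_⟩
  rw [intersectionLength, Module.length_eq_finrank, Module.length_eq_finrank] at hmilnor
  exact_mod_cast hmilnor

/-- For a polynomial `f` vanishing at the origin whose image `F` in `ℂ[[x,y]]` is reduced
(with `r ≥ 1` pairwise non-associated irreducible formal factors), the Tjurina number, Milnor
number, and δ-invariant satisfy `τ(f) ≤ μ(f) ≤ 2δ(f)` (used in the proof of Proposition 3.1). -/
theorem tjurina_le_milnor_le_two_delta (f : MvPolynomial (Fin 2) ℂ)
    (h0 : constantCoeff f = 0)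
    (r : ℕ) (hr : 1 ≤ r) (u : (MvPowerSeries (Fin 2) ℂ)ˣ)
    (g : Fin r → MvPowerSeries (Fin 2) ℂ)
    (hirr : ∀ i, Irreducible (g i))
    (hna : ∀ i j, i ≠ j → ¬ Associated (g i) (g j))
    (hF : (↑f : MvPowerSeries (Fin 2) ℂ) = ↑u * ∏ i, g i)
    (K : Type) [CommRing K] [Algebra (CurveGermRing f) K]
    [IsFractionRing (CurveGermRing f) K] [Algebra ℂ K]
    [IsScalarTower ℂ (CurveGermRing f) K] :
    tjurinaNumber f ≤ milnorNumber f ∧ milnorNumber f ≤ 2 * deltaInvariant f K := by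
  have : Nonempty (Fin r) := ⟨⟨0, hr⟩⟩
  exact tjurina_le_milnor_le_two_delta_general f u g hirr hna hF
    (R := CurveGermRing f) (by exact AlgEquiv.refl) K
end

section
/- Let ρ ≥ 1 be an integer and let d : Fin ρ → ℚ satisfy d 0 > 0 and d j < 0 for every j ≠ 0. Fix n : Fin ρ → ℚ, a vector β : Fin ρ → ℚ, and a positive integer N. Then the set of pairs (v, w) of vectors in ℚ^ρ satisfying: (i) N·(v j) ∈ ℤ and N·(w j) ∈ ℤ for every j; (ii) v + w = β; (iii) v 0 > 0 and w 0 > 0; and (iv) for every j ≠ 0, (n j)·(d 0)·(v 0) + (d j)·(v j) > 0 and (n j)·(d 0)·(w 0) + (d j)·(w j) > 0, is finite. -/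
/-!
A linear functional that is nonnegative on both summands of `β = v + w` takes a value between `0`
and its value at `β` on `v`. If finitely many such functionals separate points, then the coordinates
of `v` are linear combinations of these bounded values, so `v` ranges over a bounded set, which
contains only finitely many vectors with a given common denominator. The functionals `v 0` and
`n j * d 0 * v 0 + d j * v j` separate points because `d j ≠ 0` for `j ≠ 0`.
-/

section

variable {ι κ K : Type*} [Field K] [LinearOrder K] [IsStrictOrderedRing K]

theorem finite_setOf_mul_eq_intCast_and_abs_le [Archimedean K] {q : K} (hq : q ≠ 0) (C : K) :
    {x : K | (∃ a : ℤ, q * x = a) ∧ |x| ≤ C}.Finite := by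
  obtain ⟨m, hm⟩ := exists_nat_ge (|q| * C)
  refine ((Set.finite_Icc (-(m : ℤ)) m).image fun a : ℤ ↦ (a : K) / q).subset ?_
  rintro x ⟨⟨a, ha⟩, hx⟩
  have abs_a_le : |(a : K)| ≤ m := calc
    |(a : K)| = |q| * |x| := by rw [← ha, abs_mul]
    _ ≤ |q| * C := by gcongr
    _ ≤ m := hm
  refine ⟨a, abs_le.mp (by exact_mod_cast abs_a_le), ?_⟩
  simp only [← ha, mul_div_cancel_left₀ x hq]

theorem abs_linearMap_apply_le_sum [Fintype κ] [DecidableEq κ] (f : (κ → K) →ₗ[K] K) (x : κ → K) :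
    |f x| ≤ ∑ k, |x k| * |f (Pi.single k 1)| := by
  calc |f x| = |∑ k, x k * f (Pi.single k 1)| := by
        conv_lhs => rw [pi_eq_sum_univ' x]
        simp only [map_sum, map_smul, smul_eq_mul]
    _ ≤ ∑ k, |x k * f (Pi.single k 1)| := Finset.abs_sum_le_sum_abs _ _
    _ = ∑ k, |x k| * |f (Pi.single k 1)| := by simp only [abs_mul]

theorem exists_forall_abs_apply_le_of_injective [Finite κ] {L : (ι → K) →ₗ[K] (κ → K)}
    (hL : Function.Injective L) (B : κ → K) :
    ∃ C : ι → K, ∀ v, (∀ k, |L v k| ≤ B k) → ∀ j, |v j| ≤ C j := by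
  classical
  cases nonempty_fintype κ
  obtain ⟨M, hM⟩ := L.exists_leftInverse_of_injective (LinearMap.ker_eq_bot.mpr hL)
  refine ⟨fun j ↦ ∑ k, B k * |M (Pi.single k 1) j|, fun v hv j ↦ ?_⟩
  calc |v j| = |(LinearMap.proj j ∘ₗ M) (L v)| := by
        rw [LinearMap.comp_apply, ← LinearMap.comp_apply M, hM, LinearMap.id_apply,
          LinearMap.proj_apply]
    _ ≤ ∑ k, |L v k| * |M (Pi.single k 1) j| := abs_linearMap_apply_le_sum _ _
    _ ≤ ∑ k, B k * |M (Pi.single k 1) j| := by gcongr with k; exact hv k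

theorem finite_decompositions_general [Finite ι] [Finite κ] [Archimedean K]
    {L : (ι → K) →ₗ[K] (κ → K)} (hL : Function.Injective L) (β : ι → K) {q : K} (hq : q ≠ 0) :
    {p : (ι → K) × (ι → K) |
      (∀ j, ∃ a : ℤ, q * p.1 j = a) ∧ p.1 + p.2 = β ∧ 0 ≤ L p.1 ∧ 0 ≤ L p.2}.Finite := by
  obtain ⟨C, hC⟩ := exists_forall_abs_apply_le_of_injective hL (L β)
  have finite_box : {v : ι → K | ∀ j, (∃ a : ℤ, q * v j = a) ∧ |v j| ≤ C j}.Finite :=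
    Set.Finite.pi' fun j ↦ finite_setOf_mul_eq_intCast_and_abs_le hq (C j)
  refine (finite_box.image fun v ↦ (v, β - v)).subset ?_
  rintro ⟨v, w⟩ ⟨hv, rfl, hLv, hLw⟩
  have abs_L_le : ∀ k, |L v k| ≤ L (v + w) k := fun k ↦ by
    rw [abs_of_nonneg (hLv k), map_add]
    exact le_add_of_nonneg_right (hLw k)
  exact ⟨v, fun j ↦ ⟨hv j, hC v abs_L_le j⟩, by simp only [add_sub_cancel_left]⟩

end

section

variable {ι R : Type*} [DecidableEq ι] [CommRing R] {i₀ : ι} {d : ι → R}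

/-- The intersection numbers of the class `∑ j, v j • D j` with the ample classes `D i₀` and
`n j • D i₀ + D j`, for an orthogonal family `D` with `D j ^ 2 = d j`. The `i₀`-th entry is
normalized to `v i₀`, leaving out the factor `d i₀`. -/
def amplePairing (i₀ : ι) (d n : ι → R) : (ι → R) →ₗ[R] (ι → R) :=
  LinearMap.pi fun j ↦
    if j = i₀ then LinearMap.proj i₀
    else (n j * d i₀) • LinearMap.proj i₀ + d j • LinearMap.proj j

theorem amplePairing_apply_self (n v : ι → R) : amplePairing i₀ d n v i₀ = v i₀ := by
  simp [amplePairing]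

theorem amplePairing_apply_of_ne (n v : ι → R) {j : ι} (hj : j ≠ i₀) :
    amplePairing i₀ d n v j = n j * d i₀ * v i₀ + d j * v j := by
  simp [amplePairing, hj]

theorem amplePairing_injective [NoZeroDivisors R] (hd : ∀ j, j ≠ i₀ → d j ≠ 0) (n : ι → R) :
    Function.Injective (amplePairing i₀ d n) := by
  refine (injective_iff_map_eq_zero _).mpr fun v hv ↦ ?_
  have v_i₀ : v i₀ = 0 := by rw [← amplePairing_apply_self (d := d) n v, hv, Pi.zero_apply]
  funext j
  by_cases hj : j = i₀
  · rw [hj, v_i₀, Pi.zero_apply]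
  · have d_mul_v : d j * v j = 0 := by
      simpa only [amplePairing_apply_of_ne n v hj, v_i₀, mul_zero, zero_add,
        Pi.zero_apply] using congrFun hv j
    exact (mul_eq_zero.mp d_mul_v).resolve_left (hd j hj)

theorem amplePairing_nonneg [Preorder R] {n v : ι → R} (hv₀ : 0 ≤ v i₀)
    (hv : ∀ j, j ≠ i₀ → 0 ≤ n j * d i₀ * v i₀ + d j * v j) : 0 ≤ amplePairing i₀ d n v := by
  intro j
  by_cases hj : j = i₀
  · rwa [hj, amplePairing_apply_self]
  · rw [amplePairing_apply_of_ne n v hj]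
    exact hv j hj

end

/-- Finiteness of numerical decompositions (the numerical core of Lemma 5.1): with an
"orthogonal basis" datum `d : Fin ρ → ℚ` with `d 0 > 0` and `d j < 0` for `j ≠ 0`,
coefficients `n`, a fixed class `β`, and a denominator-clearing integer `N > 0`, the set of
pairs `(v, w)` of vectors with `N·v, N·w` integral, `v + w = β`, positive pairing with the
ample class (`v 0 > 0`, `w 0 > 0`), and positive pairing with each class `n j · D₀ + D_j`,
is finite. -/
theorem finite_decompositions (ρ : ℕ) [NeZero ρ] (d : Fin ρ → ℚ) (hd0 : 0 < d 0)
    (hdneg : ∀ j : Fin ρ, j ≠ 0 → d j < 0) (n : Fin ρ → ℚ) (β : Fin ρ → ℚ)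
    (N : ℕ) (hN : 0 < N) :
    {p : (Fin ρ → ℚ) × (Fin ρ → ℚ) |
      (∀ j, ∃ a : ℤ, (N : ℚ) * p.1 j = a) ∧
      (∀ j, ∃ a : ℤ, (N : ℚ) * p.2 j = a) ∧
      p.1 + p.2 = β ∧
      0 < p.1 0 ∧ 0 < p.2 0 ∧
      (∀ j : Fin ρ, j ≠ 0 →
        0 < n j * d 0 * p.1 0 + d j * p.1 j ∧
        0 < n j * d 0 * p.2 0 + d j * p.2 j)}.Finite := by
  refine (finite_decompositions_general (amplePairing_injective (fun j hj ↦ (hdneg j hj).ne) n) β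
    (Nat.cast_ne_zero.mpr hN.ne')).subset ?_
  rintro ⟨v, w⟩ ⟨hv, -, hvw, hv₀, hw₀, hpos⟩
  exact ⟨hv, hvw, amplePairing_nonneg hv₀.le fun j hj ↦ (hpos j hj).1.le,
    amplePairing_nonneg hw₀.le fun j hj ↦ (hpos j hj).2.le⟩
end
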